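/- arXiv:math/0412090 — 4 statements merged into one kernel-verified Lean document; each statement's English description precedes it below -/
import Mathlib

section
/- Let w be a positive even integer and let E be an even weighted Dedekind symbol of weight w whose reciprocity function is a polynomial, i.e. there exists a homogeneous polynomial g(X,Y) of degree w with complex coefficients such that E(h,k) − E(k,−h) = g(h,k) for all h,k ∈ ℤ⁺. Then E is a linear combination of the symbols E_{w,n} for odd n with 0 < n < w together with F_w and G_w; that is, there exist constants c_n ∈ ℂ (n odd, 0<n<w) and a, b ∈ ℂ such that E(h,k) = Σ_{0<n<w, n odd} c_n·E_{w,n}(h,k) + a·h^w + b·gcd(h,k)^w for all (h,k) ∈ ℤ⁺×ℤ. -/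
open scoped Classical
open MvPolynomial

/-- A weighted Dedekind symbol of weight `w`. -/
def IsDedekindSymbol (w : ℕ) (E : ℤ → ℤ → ℂ) : Prop :=
  (∀ h k : ℤ, 0 < h → E h (k + h) = E h k) ∧
  (∀ h k c : ℤ, 0 < h → 0 < c → E (c * h) (c * k) = (c : ℂ) ^ w * E h k)

/-- The `m`-th Bernoulli function `B̄_m(x) = B_m(x − ⌊x⌋)` (ℂ-valued, rational argument). -/
noncomputable def Bbar (m : ℕ) (x : ℚ) : ℂ :=
  ((Polynomial.bernoulli m).eval (x - ⌊x⌋) : ℚ)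

/-- The `m`-th Bernoulli number `B_m = B_m(0)`. -/
noncomputable def Bnum (m : ℕ) : ℂ := ((bernoulli m : ℚ) : ℂ)

/-- The finite sum `I_{w,n}(h,k) = (1/2)·∑ sgn(k/h+b/a)·(ak+bh)^{w-n}·(ck+dh)^n`,
over quadruples `(a,b,c,d) ∈ ℤ⁴` with `ad−bc = 1`, `a ≠ 0`, `c ≠ 0`,
`|b+⌊k/h+1/2⌋a| ≤ |a| ≤ h`, `|d+⌊k/h+1/2⌋c| ≤ |c| ≤ h` and `(k/h+b/a)(k/h+d/c) < 0`;
the factor `1/2` accounts for the quotient of `SL(2,ℤ)` by `±1`. -/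
noncomputable def Iwn (w n : ℕ) (h k : ℤ) : ℂ :=
  (1 / 2) * ∑ᶠ p : ℤ × ℤ × ℤ × ℤ,
    if p.1 * p.2.2.2 - p.2.1 * p.2.2.1 = 1 ∧ p.1 ≠ 0 ∧ p.2.2.1 ≠ 0 ∧
        |p.2.1 + ⌊(k : ℚ) / h + 1 / 2⌋ * p.1| ≤ |p.1| ∧ |p.1| ≤ h ∧
        |p.2.2.2 + ⌊(k : ℚ) / h + 1 / 2⌋ * p.2.2.1| ≤ |p.2.2.1| ∧ |p.2.2.1| ≤ h ∧
        ((k : ℚ) / h + p.2.1 / p.1) * ((k : ℚ) / h + p.2.2.2 / p.2.2.1) < 0 then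
      (Real.sign ((k : ℝ) / h + (p.2.1 : ℝ) / p.1) : ℂ) *
        ((p.1 * k + p.2.1 * h : ℤ) : ℂ) ^ (w - n) * ((p.2.2.1 * k + p.2.2.2 * h : ℤ) : ℂ) ^ n
    else 0

/-- `E_{w,n}` for odd `n`. -/
noncomputable def EwnOdd (w n : ℕ) (h k : ℤ) : ℂ :=
  Iwn w n h k - Bbar (n + 1) ((k : ℚ) / h) / ((n : ℂ) + 1) * (h : ℂ) ^ w
    - Bbar (w - n + 1) ((k : ℚ) / h) / (((w - n : ℕ) : ℂ) + 1) * (h : ℂ) ^ w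
    + ((w : ℂ) + 2) / Bnum (w + 2) * (Bnum (n + 1) / ((n : ℂ) + 1))
      * (Bnum (w - n + 1) / (((w - n : ℕ) : ℂ) + 1)) * (h : ℂ) ^ w


def TT (h k : ℤ) (p : ℤ × ℤ × ℤ × ℤ) : Prop :=
  p.1 * p.2.2.2 - p.2.1 * p.2.2.1 = 1 ∧ 0 < p.1 * (p.2.2.1 * k + p.2.2.2 * h) ∧
    p.2.2.1 * (p.1 * k + p.2.1 * h) < 0

noncomputable def vv (m n : ℕ) (h k : ℤ) (p : ℤ × ℤ × ℤ × ℤ) : ℂ :=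
  ((|p.1 * k + p.2.1 * h| : ℤ) : ℂ) ^ m * ((|p.2.2.1 * k + p.2.2.2 * h| : ℤ) : ℂ) ^ n

lemma TT_key {h k a b c d : ℤ} (hdet : a * d - b * c = 1) :
    a * (c * k + d * h) - c * (a * k + b * h) = h := by
  linear_combination h * hdet

lemma TT_bounds {h k a b c d : ℤ} (hT : TT h k (a, b, c, d)) :
    |a| < h ∧ |c| < h ∧ |a * k + b * h| < h ∧ |c * k + d * h| < h ∧ a ≠ 0 ∧ c ≠ 0 ∧
      a * k + b * h ≠ 0 ∧ c * k + d * h ≠ 0 := by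
  obtain ⟨h1, h2, h3⟩ := hT
  simp only at h1 h2 h3
  have key := TT_key (h := h) (k := k) h1
  set A := a * k + b * h
  set C := c * k + d * h
  have ha : a ≠ 0 := by rintro rfl; simp at h2
  have hc : c ≠ 0 := by rintro rfl; simp at h3
  have hA : A ≠ 0 := by intro e; simp [e] at h3
  have hC : C ≠ 0 := by intro e; simp [e] at h2
  have e1 : a * C = |a| * |C| := by rw [← abs_mul, abs_of_pos h2]
  have e2 : c * A = -(|c| * |A|) := by rw [← abs_mul, abs_of_neg h3]; ring
  have pa := Int.one_le_abs ha
  have pc := Int.one_le_abs hc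
  have pA := Int.one_le_abs hA
  have pC := Int.one_le_abs hC
  have := mul_pos (show 0 < |a| by omega) (show 0 < |C| by omega)
  have := mul_pos (show 0 < |c| by omega) (show 0 < |A| by omega)
  refine ⟨?_, ?_, ?_, ?_, ha, hc, hA, hC⟩ <;> nlinarith

lemma TT_finite (h k : ℤ) (hh : 0 < h) : {p | TT h k p}.Finite := by
  have hf : (Set.Icc (-h) h ×ˢ Set.Icc (-h) h ×ˢ Set.Icc (-h) h ×ˢ Set.Icc (-h) h).Finite :=
    (Set.finite_Icc _ _).prod ((Set.finite_Icc _ _).prod ((Set.finite_Icc _ _).prod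
      (Set.finite_Icc _ _)))
  refine Set.Finite.of_finite_image (f := fun p : ℤ × ℤ × ℤ × ℤ =>
    (p.1, p.1 * k + p.2.1 * h, p.2.2.1, p.2.2.1 * k + p.2.2.2 * h)) (hf.subset ?_) ?_
  · rintro _ ⟨⟨a, b, c, d⟩, hp, rfl⟩
    obtain ⟨h1, h2, h3, h4, -⟩ := TT_bounds hp
    rw [abs_lt] at h1 h2 h3 h4
    simp only [Set.mem_prod, Set.mem_Icc]
    omega
  · rintro ⟨a, b, c, d⟩ - ⟨a', b', c', d'⟩ - he
    simp only [Prod.mk.injEq] at he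
    obtain ⟨rfl, h1, rfl, h2⟩ := he
    have h1' : b * h = b' * h := by linarith
    have h2' : d * h = d' * h := by linarith
    rw [mul_right_cancel₀ hh.ne' h1', mul_right_cancel₀ hh.ne' h2']

lemma near_aux {h k a b : ℤ} (hh : 0 < h) (r : ℤ) (hr : 2 * |k - r * h| ≤ h)
    (hA : |a * k + b * h| < h) : |b + r * a| ≤ |a| := by
  by_contra hcon
  push Not at hcon
  have e : a * k + b * h = a * (k - r * h) + (b + r * a) * h := by ring
  rw [e] at hA
  have h1 : |(b + r * a) * h| ≤ |a * (k - r * h) + (b + r * a) * h| + |a * (k - r * h)| := by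
    have := abs_sub (a * (k - r * h) + (b + r * a) * h) (a * (k - r * h))
    simpa using this
  rw [abs_mul, abs_mul a, abs_of_pos hh] at h1
  have h2 := abs_nonneg a
  nlinarith [abs_nonneg (k - r * h)]

lemma cond_iff {h k a b c d : ℤ} (hh : 0 < h) :
    (a * d - b * c = 1 ∧ a ≠ 0 ∧ c ≠ 0 ∧
        |b + ⌊(k : ℚ) / h + 1 / 2⌋ * a| ≤ |a| ∧ |a| ≤ h ∧
        |d + ⌊(k : ℚ) / h + 1 / 2⌋ * c| ≤ |c| ∧ |c| ≤ h ∧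
        ((k : ℚ) / h + b / a) * ((k : ℚ) / h + d / c) < 0) ↔ TT h k (a, b, c, d) := by
  have hq : (0 : ℚ) < h := by exact_mod_cast hh
  have prod : a ≠ 0 → c ≠ 0 → (((k : ℚ) / h + b / a) * ((k : ℚ) / h + d / c) < 0 ↔
      (a * (c * k + d * h)) * (c * (a * k + b * h)) < 0) := by
    intro ha hc
    have ha' : (a : ℚ) ≠ 0 := by exact_mod_cast ha
    have hc' : (c : ℚ) ≠ 0 := by exact_mod_cast hc
    have e : ((k : ℚ) / h + b / a) * ((k : ℚ) / h + d / c) =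
      (((a * (c * k + d * h)) * (c * (a * k + b * h)) : ℤ) : ℚ) * (1 / (a * c * h) ^ 2) := by
      push_cast
      field_simp
    have hpos : (0 : ℚ) < 1 / (a * c * h) ^ 2 := by positivity
    rw [e, ← Int.cast_lt_zero (R := ℚ)]
    constructor
    · intro hx
      by_contra hy
      exact absurd hx (not_lt.mpr (mul_nonneg (not_lt.mp hy) hpos.le))
    · intro hx
      exact mul_neg_of_neg_of_pos hx hpos
  constructor
  · rintro ⟨h1, ha, hc, -, -, -, -, h2⟩
    rw [prod ha hc] at h2
    have key := TT_key (h := h) (k := k) h1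
    refine ⟨h1, ?_, ?_⟩ <;> simp only
    · by_contra hcon
      nlinarith
    · by_contra hcon
      nlinarith
  · intro hT
    obtain ⟨b1, b2, b3, b4, ha, hc, -, -⟩ := TT_bounds hT
    have hr : 2 * |k - ⌊(k : ℚ) / h + 1 / 2⌋ * h| ≤ h := by
      have f1 := Int.floor_le ((k : ℚ) / h + 1 / 2)
      have f2 := Int.lt_floor_add_one ((k : ℚ) / h + 1 / 2)
      generalize ⌊(k : ℚ) / h + 1 / 2⌋ = r at *
      have e : (k : ℚ) = (k : ℚ) / h * h := by field_simp
      have g1 : (2 * (k - r * h) : ℚ) ≤ h := by nlinarith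
      have g2 : (-h : ℚ) ≤ 2 * (k - r * h) := by nlinarith
      have g1' : 2 * (k - r * h) ≤ h := by exact_mod_cast g1
      have g2' : -h ≤ 2 * (k - r * h) := by exact_mod_cast g2
      rcases abs_cases (k - r * h) with ⟨e, _⟩ | ⟨e, _⟩ <;> rw [e] <;> linarith
    refine ⟨hT.1, ha, hc, near_aux hh _ hr b3, b1.le, near_aux hh _ hr b4, b2.le, ?_⟩
    rw [prod ha hc]
    exact mul_neg_of_pos_of_neg hT.2.1 hT.2.2

lemma term_eq {h k a b c d : ℤ} (hh : 0 < h) (hT : TT h k (a, b, c, d)) {m n : ℕ}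
    (hm : Odd m) (hn : Odd n) :
    (Real.sign ((k : ℝ) / h + (b : ℝ) / a) : ℂ) * ((a * k + b * h : ℤ) : ℂ) ^ m
      * ((c * k + d * h : ℤ) : ℂ) ^ n = vv m n h k (a, b, c, d) := by
  obtain ⟨b1, b2, b3, b4, ha, hc, hA, hC⟩ := TT_bounds hT
  obtain ⟨h1, h2, h3⟩ := hT
  simp only at h1 h2 h3
  have hhr : (0 : ℝ) < h := by exact_mod_cast hh
  have har : (a : ℝ) ≠ 0 := by exact_mod_cast ha
  have e : (k : ℝ) / h + (b : ℝ) / a = ((a * k + b * h : ℤ) : ℝ) / (a * h) := by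
    push_cast; field_simp
  rw [e]
  unfold vv
  simp only
  generalize a * k + b * h = A at *
  generalize c * k + d * h = C at *
  rcases lt_or_gt_of_ne ha with ha | ha
  · have hC' : C < 0 := by nlinarith
    have har' : (a : ℝ) < 0 := by exact_mod_cast ha
    rcases lt_or_gt_of_ne hA with hA | hA
    · have : (0 : ℝ) < (A : ℝ) / (a * h) :=
        div_pos_of_neg_of_neg (by exact_mod_cast hA) (mul_neg_of_neg_of_pos har' hhr)
      rw [Real.sign_of_pos this, abs_of_neg hA, abs_of_neg hC']
      push_cast
      rw [hm.neg_pow, hn.neg_pow]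
      ring
    · have : (A : ℝ) / (a * h) < 0 :=
        div_neg_of_pos_of_neg (by exact_mod_cast hA) (mul_neg_of_neg_of_pos har' hhr)
      rw [Real.sign_of_neg this, abs_of_pos hA, abs_of_neg hC']
      push_cast
      rw [hn.neg_pow]
      ring
  · have hC' : 0 < C := by nlinarith
    have har' : (0 : ℝ) < a := by exact_mod_cast ha
    rcases lt_or_gt_of_ne hA with hA | hA
    · have : (A : ℝ) / (a * h) < 0 :=
        div_neg_of_neg_of_pos (by exact_mod_cast hA) (mul_pos har' hhr)
      rw [Real.sign_of_neg this, abs_of_neg hA, abs_of_pos hC']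
      push_cast
      rw [hm.neg_pow]
      ring
    · have : (0 : ℝ) < (A : ℝ) / (a * h) :=
        div_pos (by exact_mod_cast hA) (mul_pos har' hhr)
      rw [Real.sign_of_pos this, abs_of_pos hA, abs_of_pos hC']
      push_cast
      ring

lemma Iwn_eq {w n : ℕ} {h k : ℤ} (hh : 0 < h) (hm : Odd (w - n)) (hn : Odd n) :
    Iwn w n h k = (1 / 2) * ∑ᶠ p, if TT h k p then vv (w - n) n h k p else 0 := by
  unfold Iwn
  congr 1
  apply finsum_congr
  rintro ⟨a, b, c, d⟩
  simp only
  by_cases hT : TT h k (a, b, c, d)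
  · rw [if_pos hT, if_pos ((cond_iff hh).mpr hT)]
    exact term_eq hh hT hm hn
  · rw [if_neg hT, if_neg (fun hx => hT ((cond_iff hh).mp hx))]

lemma Iwn_zero {w n : ℕ} {h : ℤ} (hh : 0 < h) (hm : Odd (w - n)) (hn : Odd n) :
    Iwn w n h 0 = 0 := by
  rw [Iwn_eq hh hm hn]
  have : ∀ p, (if TT h 0 p then vv (w - n) n h 0 p else 0) = 0 := by
    rintro ⟨a, b, c, d⟩
    rw [if_neg]
    rintro ⟨h1, h2, h3⟩
    simp only at h1 h2 h3
    have e2 : 0 < h * (a * d) := by linarith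
    have e3 : 0 < h * (-(b * c)) := by linarith
    have := pos_of_mul_pos_right e2 hh.le
    have := pos_of_mul_pos_right e3 hh.le
    omega
  simp [this]

def shiftE : (ℤ × ℤ × ℤ × ℤ) ≃ (ℤ × ℤ × ℤ × ℤ) where
  toFun p := (p.1, p.2.1 - p.1, p.2.2.1, p.2.2.2 - p.2.2.1)
  invFun p := (p.1, p.2.1 + p.1, p.2.2.1, p.2.2.2 + p.2.2.1)
  left_inv p := by simp
  right_inv p := by simp

lemma Iwn_shift {w n : ℕ} {h k : ℤ} (hh : 0 < h) (hm : Odd (w - n)) (hn : Odd n) :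
    Iwn w n h (k + h) = Iwn w n h k := by
  rw [Iwn_eq hh hm hn, Iwn_eq hh hm hn]
  congr 1
  rw [← finsum_comp_equiv shiftE]
  apply finsum_congr
  rintro ⟨a, b, c, d⟩
  have e1 : a * (k + h) + (b - a) * h = a * k + b * h := by ring
  have e2 : c * (k + h) + (d - c) * h = c * k + d * h := by ring
  have e3 : a * (d - c) - (b - a) * c = a * d - b * c := by ring
  refine if_congr ?_ ?_ rfl
  · simp only [shiftE, Equiv.coe_fn_mk, TT, e1, e2, e3]
  · simp only [shiftE, Equiv.coe_fn_mk, vv, e1, e2]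

def swapE : (ℤ × ℤ × ℤ × ℤ) ≃ (ℤ × ℤ × ℤ × ℤ) where
  toFun p := (-p.2.1, -p.1, p.2.2.2, p.2.2.1)
  invFun p := (-p.2.1, -p.1, p.2.2.2, p.2.2.1)
  left_inv p := by simp
  right_inv p := by simp

def T2 (h k : ℤ) (p : ℤ × ℤ × ℤ × ℤ) : Prop :=
  p.2.1 * (p.2.2.1 * k + p.2.2.2 * h) < 0 ∧ 0 < p.2.2.2 * (p.1 * k + p.2.1 * h)

noncomputable def rr (m n : ℕ) (h k : ℤ) : ℂ :=
  ∑ᶠ p, if TT h k p ∧ ¬ T2 h k p then vv m n h k p else 0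

noncomputable def cc (m n : ℕ) (h k : ℤ) : ℂ :=
  ∑ᶠ p, if TT h k p ∧ T2 h k p then vv m n h k p else 0

lemma cc_swap (m n : ℕ) (h k : ℤ) : cc m n h k = cc m n k h := by
  unfold cc
  rw [← finsum_comp_equiv swapE]
  apply finsum_congr
  rintro ⟨a, b, c, d⟩
  have e1 : -b * k + -a * h = -(a * h + b * k) := by ring
  have e2 : d * k + c * h = c * h + d * k := by ring
  have e3 : -b * c - -a * d = a * d - b * c := by ring
  refine if_congr ?_ ?_ rfl
  · simp only [swapE, Equiv.coe_fn_mk, TT, T2, e1, e2, e3]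
    simp only [mul_neg, neg_mul, Left.neg_neg_iff, Left.neg_pos_iff]
    tauto
  · simp only [swapE, Equiv.coe_fn_mk, vv, e1, e2, abs_neg]

lemma rr_add_cc (m n : ℕ) (h k : ℤ) (hh : 0 < h) :
    ∑ᶠ p, (if TT h k p then vv m n h k p else 0) = rr m n h k + cc m n h k := by
  unfold rr cc
  rw [← finsum_add_distrib]
  · apply finsum_congr
    intro p
    by_cases h1 : TT h k p <;> by_cases h2 : T2 h k p <;> simp [h1, h2]
  · apply (TT_finite h k hh).subset
    intro p hp
    by_contra hc
    simp only [Set.mem_ofPred_eq] at hc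
    simp [hc] at hp
  · apply (TT_finite h k hh).subset
    intro p hp
    by_contra hc
    simp only [Set.mem_ofPred_eq] at hc
    simp [hc] at hp

lemma Iwn_sub {w n : ℕ} {h k : ℤ} (hh : 0 < h) (hk : 0 < k) (hm : Odd (w - n)) (hn : Odd n) :
    Iwn w n h k - Iwn w n k h = (1 / 2) * (rr (w - n) n h k - rr (w - n) n k h) := by
  rw [Iwn_eq hh hm hn, Iwn_eq hk hm hn, rr_add_cc _ _ _ _ hh, rr_add_cc _ _ _ _ hk, cc_swap]
  ring

lemma class_pos {h k a b c d : ℤ} (hh : 0 < h) (hk : 0 < k) (ha : 0 < a)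
    (hT : TT h k (a, b, c, d)) (h2 : ¬ T2 h k (a, b, c, d)) :
    (a = 1 ∧ b = 0 ∧ d = 1 ∧ 1 ≤ -c ∧ -c * k < h) ∨
    (b = -1 ∧ c = 1 ∧ d = 0 ∧ 1 ≤ a ∧ a * k < h) := by
  obtain ⟨h1, hC, hA⟩ := hT
  simp only [T2] at h1 hC hA h2
  have hC' : 0 < c * k + d * h := pos_of_mul_pos_right hC ha.le
  rcases le_or_gt 0 b with hb | hb
  · left
    have hApos : 0 < a * k + b * h := by positivity
    have hc : c < 0 := by
      by_contra hx
      nlinarith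
    have hd : 0 < d := by
      by_contra hx
      nlinarith
    have had : 1 ≤ a * d := by nlinarith
    have hb0 : b = 0 := by
      by_contra hx
      have : 1 ≤ b := by omega
      nlinarith
    subst hb0
    have had1 : a * d = 1 := by linarith
    have ha1 : a = 1 := by nlinarith
    have hd1 : d = 1 := by nlinarith
    subst ha1 hd1
    refine ⟨rfl, rfl, rfl, by omega, by linarith⟩
  · right
    have hdA : d * (a * k + b * h) ≤ 0 := by
      by_contra hx
      exact h2 ⟨mul_neg_of_neg_of_pos hb hC', not_le.mp hx⟩
    rcases lt_trichotomy (a * k + b * h) 0 with hA' | hA' | hA'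
    · have hc : 0 < c := by
        by_contra hx
        nlinarith
      have hd : 0 ≤ d := by
        by_contra hx
        nlinarith
      have had : 0 ≤ a * d := by positivity
      have hbc : b * c ≤ -1 := by nlinarith
      have hbc1 : b * c = -1 := by omega
      have had0 : a * d = 0 := by omega
      have hd0 : d = 0 := by
        rcases mul_eq_zero.mp had0 with h | h
        · omega
        · exact h
      have hb1 : b = -1 := by nlinarith
      subst hb1 hd0
      have : c = 1 := by omega
      subst this
      refine ⟨rfl, rfl, rfl, by omega, by linarith⟩
    · rw [hA'] at hA
      simp at hA
    · exfalso
      have hc : c < 0 := by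
        by_contra hx
        nlinarith
      have hd : d ≤ 0 := by
        by_contra hx
        nlinarith
      nlinarith

lemma TT_neg {h k a b c d : ℤ} : TT h k (-a, -b, -c, -d) ↔ TT h k (a, b, c, d) := by
  simp only [TT]
  have e1 : -a * -d - -b * -c = a * d - b * c := by ring
  have e2 : -a * (-c * k + -d * h) = a * (c * k + d * h) := by ring
  have e3 : -c * (-a * k + -b * h) = c * (a * k + b * h) := by ring
  rw [e1, e2, e3]

lemma T2_neg {h k a b c d : ℤ} : T2 h k (-a, -b, -c, -d) ↔ T2 h k (a, b, c, d) := by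
  simp only [T2]
  have e2 : -b * (-c * k + -d * h) = b * (c * k + d * h) := by ring
  have e3 : -d * (-a * k + -b * h) = d * (a * k + b * h) := by ring
  rw [e2, e3]

noncomputable def Mset (h k : ℤ) : Finset ℤ := (Finset.Icc 1 h).filter (fun j => j * k < h)

lemma mem_Mset {h k j : ℤ} (hk : 0 < k) : j ∈ Mset h k ↔ 1 ≤ j ∧ j * k < h := by
  simp only [Mset, Finset.mem_filter, Finset.mem_Icc]
  constructor
  · tauto
  · rintro ⟨h1, h2⟩
    exact ⟨⟨h1, by nlinarith⟩, h2⟩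

lemma class_iff {h k : ℤ} (hh : 0 < h) (hk : 0 < k) (p : ℤ × ℤ × ℤ × ℤ) :
    (TT h k p ∧ ¬ T2 h k p) ↔ p ∈
      ((Mset h k).image (fun j => ((1 : ℤ), (0 : ℤ), -j, (1 : ℤ))) ∪
        (Mset h k).image (fun j => (j, (-1 : ℤ), (1 : ℤ), (0 : ℤ)))) ∪
      ((Mset h k).image (fun j => ((-1 : ℤ), (0 : ℤ), j, (-1 : ℤ))) ∪
        (Mset h k).image (fun j => (-j, (1 : ℤ), (-1 : ℤ), (0 : ℤ)))) := by
  obtain ⟨a, b, c, d⟩ := p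
  simp only [Finset.mem_union, Finset.mem_image, mem_Mset hk, Prod.mk.injEq]
  constructor
  · rintro ⟨hT, h2⟩
    have ha := (TT_bounds hT).2.2.2.2.1
    rcases lt_or_gt_of_ne ha with ha | ha
    · right
      rcases class_pos hh hk (neg_pos.mpr ha) (TT_neg.mpr hT) (fun hx => h2 (T2_neg.mp hx)) with
        ⟨h1, h2, h3, h4, h5⟩ | ⟨h1, h2, h3, h4, h5⟩
      · left
        exact ⟨c, ⟨by omega, by simpa using h5⟩, by omega, by omega, rfl, by omega⟩
      · right
        exact ⟨-a, ⟨by omega, by simpa using h5⟩, by omega, by omega, by omega, by omega⟩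
    · left
      rcases class_pos hh hk ha hT h2 with
        ⟨h1, h2, h3, h4, h5⟩ | ⟨h1, h2, h3, h4, h5⟩
      · left
        exact ⟨-c, ⟨by omega, by simpa using h5⟩, by omega, by omega, by omega, by omega⟩
      · right
        exact ⟨a, ⟨by omega, by simpa using h5⟩, by omega, by omega, by omega, by omega⟩
  · have f1 : ∀ j, 1 ≤ j → j * k < h → TT h k (1, 0, -j, 1) ∧ ¬ T2 h k (1, 0, -j, 1) := by
      intro j h1 h2
      simp only [TT, T2]
      refine ⟨⟨by norm_num, by linarith, by nlinarith⟩, by simp⟩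
    have f2 : ∀ j, 1 ≤ j → j * k < h → TT h k (j, -1, 1, 0) ∧ ¬ T2 h k (j, -1, 1, 0) := by
      intro j h1 h2
      simp only [TT, T2]
      refine ⟨⟨by norm_num, by nlinarith, by linarith⟩, by simp⟩
    rintro ((⟨j, ⟨h1, h2⟩, rfl, rfl, rfl, rfl⟩ | ⟨j, ⟨h1, h2⟩, rfl, rfl, rfl, rfl⟩) |
      (⟨j, ⟨h1, h2⟩, rfl, rfl, rfl, rfl⟩ | ⟨j, ⟨h1, h2⟩, rfl, rfl, rfl, rfl⟩))
    · exact f1 _ h1 h2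
    · exact f2 _ h1 h2
    · have := f1 _ h1 h2
      rw [← TT_neg, ← T2_neg] at this
      simpa using this
    · have := f2 _ h1 h2
      rw [← TT_neg, ← T2_neg] at this
      simpa using this

lemma rr_eq {h k : ℤ} (hh : 0 < h) (hk : 0 < k) (m n : ℕ) :
    rr m n h k = 2 * ∑ j ∈ Mset h k,
      ((k : ℂ) ^ m * ((h : ℂ) - j * k) ^ n + ((h : ℂ) - j * k) ^ m * (k : ℂ) ^ n) := by
  unfold rr
  simp only [class_iff hh hk]
  rw [finsum_eq_sum_of_support_subset (s := _) _ (by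
    intro p hp
    by_contra hc
    exact hp (if_neg hc)), Finset.sum_congr rfl (fun p hp => if_pos hp)]
  rw [Finset.sum_union, Finset.sum_union, Finset.sum_union, Finset.sum_image, Finset.sum_image,
    Finset.sum_image, Finset.sum_image, ← Finset.sum_add_distrib, ← Finset.sum_add_distrib,
    ← Finset.sum_add_distrib, Finset.mul_sum]
  · apply Finset.sum_congr rfl
    intro j hj
    rw [mem_Mset hk] at hj
    obtain ⟨h1, h2⟩ := hj
    simp only [vv]
    have e1 : |(1 : ℤ) * k + 0 * h| = k := by rw [abs_of_pos (by linarith)]; ring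
    have e2 : |-j * k + 1 * h| = h - j * k := by rw [abs_of_pos (by linarith)]; ring
    have e3 : |j * k + -1 * h| = h - j * k := by rw [abs_of_neg (by linarith)]; ring
    have e5 : |(-1 : ℤ) * k + 0 * h| = k := by rw [abs_of_neg (by linarith)]; ring
    rw [e1, e2, e3, e5]
    push_cast
    ring
  all_goals first
    | (intro x _ y _ hxy
       simp only [Prod.mk.injEq] at hxy
       omega)
    | (rw [Finset.disjoint_left]
       rintro ⟨a, b, c, d⟩ hx hy
       simp only [Finset.mem_union, Finset.mem_image, mem_Mset hk, Prod.mk.injEq] at hx hy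
       rcases hx with ⟨i, ⟨hi, -⟩, hx⟩ | ⟨i, ⟨hi, -⟩, hx⟩ <;>
         rcases hy with ⟨j, ⟨hj, -⟩, hy⟩ | ⟨j, ⟨hj, -⟩, hy⟩ <;> omega)

noncomputable def bp (n : ℕ) : Polynomial ℂ :=
  Polynomial.C (1 / ((n : ℂ) + 1)) * (Polynomial.bernoulli (n + 1)).map (algebraMap ℚ ℂ)

lemma bp_eval_rat (n : ℕ) (x : ℚ) :
    (bp n).eval (x : ℂ) = (((Polynomial.bernoulli (n + 1)).eval x : ℚ) : ℂ) / ((n : ℂ) + 1) := by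
  have e : (x : ℂ) = algebraMap ℚ ℂ x := rfl
  have : (((Polynomial.bernoulli (n + 1)).eval x : ℚ) : ℂ) =
    ((Polynomial.bernoulli (n + 1)).map (algebraMap ℚ ℂ)).eval (x : ℂ) := by
    rw [e, Polynomial.eval_map_algebraMap, Polynomial.aeval_algebraMap_apply]
    simp
  rw [this, bp, Polynomial.eval_mul, Polynomial.eval_C]
  ring

lemma bp_succ (n : ℕ) (x : ℚ) :
    (bp n).eval ((x : ℂ) + 1) - (bp n).eval (x : ℂ) = (x : ℂ) ^ n := by
  have e : (x : ℂ) + 1 = ((1 + x : ℚ) : ℂ) := by push_cast; ring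
  rw [e, bp_eval_rat, bp_eval_rat, Polynomial.bernoulli_eval_one_add]
  have : (n : ℂ) + 1 ≠ 0 := by exact_mod_cast Nat.succ_ne_zero n
  push_cast
  field_simp
  simp

lemma bern_sum (n N : ℕ) (x : ℚ) :
    (Polynomial.bernoulli (n + 1)).eval (x + N) = (Polynomial.bernoulli (n + 1)).eval x
      + (n + 1) * ∑ i ∈ Finset.range N, (x + i) ^ n := by
  induction N with
  | zero => simp
  | succ N ih =>
    have e : x + ((N + 1 : ℕ) : ℚ) = 1 + (x + N) := by push_cast; ring
    rw [e, Polynomial.bernoulli_eval_one_add, ih, Finset.sum_range_succ]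
    push_cast
    ring

lemma Mset_sum {h k : ℤ} (hh : 0 < h) (hk : 0 < k) {n : ℕ} (hn : n ≠ 0) :
    ∑ j ∈ Mset h k, ((h : ℚ) - j * k) ^ n = (k : ℚ) ^ n *
      (((Polynomial.bernoulli (n + 1)).eval ((h : ℚ) / k)
        - (Polynomial.bernoulli (n + 1)).eval ((h : ℚ) / k - ⌊(h : ℚ) / k⌋)) / (n + 1)) := by
  have hkq : (0 : ℚ) < k := by exact_mod_cast hk
  have hhq : (0 : ℚ) < h := by exact_mod_cast hh
  have hfl : ∀ j : ℤ, j ≤ ⌊(h : ℚ) / k⌋ ↔ j * k ≤ h := by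
    intro j
    rw [Int.le_floor, le_div_iff₀ hkq]
    exact_mod_cast Iff.rfl
  have hnn : 0 ≤ ⌊(h : ℚ) / k⌋ := by rw [hfl]; linarith
  have hy : (h : ℚ) = k * ((h : ℚ) / k) := by field_simp
  set y := (h : ℚ) / k with hydef
  obtain ⟨N, hN⟩ := Int.eq_ofNat_of_zero_le hnn
  have hb := bern_sum n N (y - ⌊y⌋)
  have e0 : y - ⌊y⌋ + (N : ℚ) = y := by rw [hN]; push_cast; ring
  rw [e0] at hb
  rw [hb]
  have hn1 : (n : ℚ) + 1 ≠ 0 := by positivity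
  rw [add_sub_cancel_left, mul_div_cancel_left₀ _ hn1, Finset.mul_sum]
  have hsub : Mset h k ⊆ Finset.Icc 1 (N : ℤ) := by
    intro j hj
    rw [mem_Mset hk] at hj
    rw [Finset.mem_Icc]
    refine ⟨hj.1, ?_⟩
    rw [← hN, hfl]
    exact hj.2.le
  rw [Finset.sum_subset hsub]
  · refine Finset.sum_nbij' (fun j => ((N : ℤ) - j).toNat) (fun i => (N : ℤ) - i) ?_ ?_ ?_ ?_ ?_
    · intro j hj
      rw [Finset.mem_Icc] at hj
      simp only [Finset.mem_range]
      omega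
    · intro i hi
      rw [Finset.mem_range] at hi
      simp only [Finset.mem_Icc]
      omega
    · intro j hj
      rw [Finset.mem_Icc] at hj
      omega
    · intro i hi
      rw [Finset.mem_range] at hi
      omega
    · intro j hj
      rw [Finset.mem_Icc] at hj
      have e1 : ((((N : ℤ) - j).toNat : ℕ) : ℚ) = (N : ℚ) - j := by
        have : ((((N : ℤ) - j).toNat : ℕ) : ℤ) = (N : ℤ) - j := by omega
        exact_mod_cast this
      rw [e1, ← mul_pow]
      congr 1
      rw [hN]
      push_cast
      rw [hy]
      ring
  · intro j hj hj2
    rw [Finset.mem_Icc, ← hN, hfl] at hj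
    rw [mem_Mset hk] at hj2
    have : j * k = h := by
      by_contra hx
      exact hj2 ⟨hj.1, lt_of_le_of_ne hj.2 hx⟩
    have h2 : (h : ℚ) - j * k = 0 := by rw [← this]; push_cast; ring
    rw [h2, zero_pow hn]

lemma Mset_sumC {h k : ℤ} (hh : 0 < h) (hk : 0 < k) {n : ℕ} (hn : n ≠ 0) :
    ∑ j ∈ Mset h k, ((h : ℂ) - j * k) ^ n = (k : ℂ) ^ n *
      ((bp n).eval ((h : ℂ) / k) - Bbar (n + 1) ((h : ℚ) / k) / ((n : ℂ) + 1)) := by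
  have := congrArg (fun q : ℚ => (q : ℂ)) (Mset_sum hh hk hn)
  have e : (h : ℂ) / k = (((h : ℚ) / k : ℚ) : ℂ) := by push_cast; rfl
  rw [e, bp_eval_rat, Bbar]
  push_cast at this ⊢
  rw [this]
  ring

lemma rr_eq2 {h k : ℤ} (hh : 0 < h) (hk : 0 < k) {m n w : ℕ} (hm : m ≠ 0) (hn : n ≠ 0)
    (hw : m + n = w) :
    (1 / 2) * rr m n h k = (k : ℂ) ^ w * ((bp n + bp m).eval ((h : ℂ) / k)) -
      (k : ℂ) ^ w * (Bbar (n + 1) ((h : ℚ) / k) / ((n : ℂ) + 1)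
        + Bbar (m + 1) ((h : ℚ) / k) / ((m : ℂ) + 1)) := by
  rw [rr_eq hh hk, Finset.sum_add_distrib, ← Finset.mul_sum, ← Finset.sum_mul,
    Mset_sumC hh hk hn, Mset_sumC hh hk hm, ← hw, pow_add, Polynomial.eval_add]
  ring

noncomputable def Kn (w n : ℕ) : ℂ :=
  ((w : ℂ) + 2) / Bnum (w + 2) * (Bnum (n + 1) / ((n : ℂ) + 1))
      * (Bnum (w - n + 1) / (((w - n : ℕ) : ℂ) + 1))

lemma Ewn_rec {h k : ℤ} (hh : 0 < h) (hk : 0 < k) {n w : ℕ} (hn : Odd n) (hm : Odd (w - n)) :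
    EwnOdd w n h k - EwnOdd w n k h = Kn w n * ((h : ℂ) ^ w - (k : ℂ) ^ w)
      - ((h : ℂ) ^ w * (bp n + bp (w - n)).eval ((k : ℂ) / h)
        - (k : ℂ) ^ w * (bp n + bp (w - n)).eval ((h : ℂ) / k)) := by
  have hm0 : w - n ≠ 0 := by rintro h; rw [h] at hm; simp at hm
  have hn0 : n ≠ 0 := by rintro rfl; simp at hn
  have hw : (w - n) + n = w := by omega
  have h1 := Iwn_sub hh hk hm hn
  rw [mul_sub, rr_eq2 hh hk hm0 hn0 hw, rr_eq2 hk hh hm0 hn0 hw] at h1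
  unfold EwnOdd Kn
  linear_combination h1

lemma Bbar_shift (m : ℕ) (x : ℚ) : Bbar m (x + 1) = Bbar m x := by
  unfold Bbar
  have e : x + 1 - (⌊x + 1⌋ : ℚ) = x - ⌊x⌋ := by
    rw [Int.floor_add_one]
    push_cast
    ring
  rw [e]

lemma Ewn_shift {h k : ℤ} (hh : 0 < h) {n w : ℕ} (hn : Odd n) (hm : Odd (w - n)) :
    EwnOdd w n h (k + h) = EwnOdd w n h k := by
  unfold EwnOdd
  have hq : (h : ℚ) ≠ 0 := by exact_mod_cast hh.ne'
  have e : ((k + h : ℤ) : ℚ) / h = (k : ℚ) / h + 1 := by push_cast; field_simp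
  rw [Iwn_shift hh hm hn, e, Bbar_shift, Bbar_shift]

lemma Ewn_zero {h : ℤ} (hh : 0 < h) {n w : ℕ} (hn : Odd n) (hm : Odd (w - n)) :
    EwnOdd w n h 0 = (h : ℂ) ^ w * EwnOdd w n 1 0 := by
  unfold EwnOdd
  rw [Iwn_zero hh hm hn, Iwn_zero one_pos hm hn]
  simp
  ring

lemma gcd_lemma {w : ℕ} (D : ℤ → ℤ → ℂ) (hs : ∀ h k, 0 < h → D h (k + h) = D h k)
    (h0 : ∀ h, 0 < h → D h 0 = (h : ℂ) ^ w * D 1 0)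
    (hsym : ∀ h k, 0 < h → 0 < k → D h k = D k h) :
    ∀ N : ℕ, ∀ h k : ℤ, 0 < h → h.toNat ≤ N → D h k = D 1 0 * ((Int.gcd h k : ℕ) : ℂ) ^ w := by
  have hmul : ∀ h k : ℤ, 0 < h → ∀ q : ℤ, D h (k + q * h) = D h k := by
    intro h k hh q
    induction q using Int.induction_on with
    | zero => simp
    | succ i ih => rw [← ih, ← hs h (k + (i : ℤ) * h) hh]; congr 1; ring
    | pred i ih => rw [← ih, ← hs h (k + (-(i : ℤ) - 1) * h) hh]; congr 1; ring
  intro N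
  induction N with
  | zero => intro h k hh hN; omega
  | succ N ih =>
    intro h k hh hN
    have e : D h k = D h (k % h) := by
      rw [← hmul h (k % h) hh (k / h)]
      congr 1
      rw [mul_comm, Int.emod_add_mul_ediv]
    have eg : Int.gcd h k = Int.gcd h (k % h) := by
      rw [Int.gcd_comm h (k % h), Int.gcd_emod, Int.gcd_comm]
    rw [e, eg]
    have p1 := Int.emod_nonneg k hh.ne'
    have p2 := Int.emod_lt_of_pos k hh
    generalize k % h = r at *
    rcases p1.eq_or_lt with hr | hr
    · subst hr
      rw [h0 h hh, Int.gcd_zero_right]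
      have : ((h.natAbs : ℕ) : ℂ) = (h : ℂ) := by
        have : ((h.natAbs : ℕ) : ℤ) = h := by omega
        have h3 := congrArg (fun z : ℤ => (z : ℂ)) this
        simp only [Int.cast_natCast] at h3
        exact h3
      rw [this]
      ring
    · rw [hsym h r hh hr, ih r h hr (by omega), Int.gcd_comm]

lemma ext_pos (F : MvPolynomial (Fin 2) ℂ)
    (hF : ∀ h k : ℤ, 0 < h → 0 < k → eval ![(h : ℂ), (k : ℂ)] F = 0) : F = 0 := by
  have hinf : (Set.range (fun n : ℕ => ((n : ℂ) + 1))).Infinite := by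
    apply Set.infinite_range_of_injective
    intro a b hab
    simpa using hab
  apply MvPolynomial.funext_set (fun _ => Set.range (fun n : ℕ => ((n : ℂ) + 1)))
    (fun _ => hinf)
  intro x hx
  obtain ⟨a, ha⟩ := hx 0 (Set.mem_univ _)
  obtain ⟨b, hb⟩ := hx 1 (Set.mem_univ _)
  have e : x = ![(((a : ℤ) + 1 : ℤ) : ℂ), (((b : ℤ) + 1 : ℤ) : ℂ)] := by
    ext i
    fin_cases i
    · simp [← ha]
    · simp [← hb]
  rw [e, hF _ _ (by positivity) (by positivity)]
  simp

lemma eval_sub2 (g u v : MvPolynomial (Fin 2) ℂ) (x : Fin 2 → ℂ) :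
    eval x (bind₁ ![u, v] g) = eval ![eval x u, eval x v] g := by
  rw [← MvPolynomial.coe_aeval_eq_eval, ← MvPolynomial.coe_aeval_eq_eval]
  simp only [RingHom.coe_coe]
  rw [MvPolynomial.aeval_bind₁]
  congr 2
  ext i
  fin_cases i <;> rfl

lemma eval_hom {w : ℕ} {g : MvPolynomial (Fin 2) ℂ} (hg : g.IsHomogeneous w) (c x y : ℂ) :
    eval ![c * x, c * y] g = c ^ w * eval ![x, y] g := by
  rw [MvPolynomial.eval_eq', MvPolynomial.eval_eq', Finset.mul_sum]
  apply Finset.sum_congr rfl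
  intro d hd
  have hd' := hg (MvPolynomial.mem_support_iff.mp hd)
  rw [Finsupp.weight_apply, Finsupp.sum_fintype _ _ (by simp)] at hd'
  simp [Fin.sum_univ_two] at hd'
  rw [Fin.prod_univ_two, Fin.prod_univ_two, ← hd']
  simp
  ring

lemma periodic_const (F : Polynomial ℂ) (hF : ∀ n : ℕ, F.eval ((n : ℂ) + 1 + 1) = F.eval ((n : ℂ) + 1)) :
    ∀ x, F.eval x = F.eval 1 := by
  have h1 : ∀ n : ℕ, F.eval ((n : ℂ) + 1) = F.eval 1 := by
    intro n
    induction n with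
    | zero => simp
    | succ n ih => rw [← ih, ← hF n]; push_cast; rfl
  have h2 : F = Polynomial.C (F.eval 1) := by
    apply Polynomial.eq_of_infinite_eval_eq
    apply Set.Infinite.mono (s := Set.range (fun n : ℕ => ((n : ℂ) + 1)))
    · rintro _ ⟨n, rfl⟩
      simp [h1 n]
    · apply Set.infinite_range_of_injective
      intro a b hab
      simpa using hab
  intro x
  rw [h2]
  simp

/-- the polynomial `g(1, x)` -/
noncomputable def dehom (g : MvPolynomial (Fin 2) ℂ) : Polynomial ℂ :=
  MvPolynomial.aeval ![(1 : Polynomial ℂ), Polynomial.X] g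

lemma dehom_eval (g : MvPolynomial (Fin 2) ℂ) (x : ℂ) :
    (dehom g).eval x = eval ![1, x] g := by
  unfold dehom
  have := MvPolynomial.map_aeval (![(1 : Polynomial ℂ), Polynomial.X])
    (Polynomial.evalRingHom x) g
  rw [Polynomial.coe_evalRingHom] at this
  rw [this, MvPolynomial.eval]
  congr 1
  ext z
  · simp
  · fin_cases z <;> simp

lemma dehom_deg {w : ℕ} {g : MvPolynomial (Fin 2) ℂ} (hg : g.IsHomogeneous w) :
    (dehom g).natDegree ≤ w := by
  have := MvPolynomial.aeval_natDegree_le (m := w) (n := 1) g hg.totalDegree_le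
    ![(1 : Polynomial ℂ), Polynomial.X] (by intro i; fin_cases i <;> simp)
  simpa [dehom] using this

lemma G_even {w : ℕ} (hw : Even w) {g : MvPolynomial (Fin 2) ℂ} (hg : g.IsHomogeneous w)
    (hA : ∀ x y : ℂ, eval ![x, y] g + eval ![y, x] g = 0)
    (hL : ∀ x y : ℂ, eval ![x, y] g = eval ![x, x + y] g + eval ![x + y, y] g) (x y : ℂ) :
    eval ![x, -y] g = eval ![x, y] g := by
  have hN : ∀ x y : ℂ, eval ![-x, -y] g = eval ![x, y] g := by
    intro x y
    have := eval_hom hg (-1) x y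
    rw [hw.neg_one_pow] at this
    simpa using this
  have hper : ∀ x y : ℂ, eval ![x, y - x] g - eval ![x, -(y - x)] g =
      eval ![x, y] g - eval ![x, -y] g := by
    intro x y
    have l1 := hL x (y - x)
    have l2 := hL y (-x)
    have a1 := hA (-x) (y - x)
    have a2 := hA y (-x)
    have n1 := hN x (-(y - x))
    have n2 := hN x (-y)
    rw [neg_neg] at n1 n2
    rw [add_sub_cancel] at l1
    rw [← sub_eq_add_neg] at l2
    linear_combination l1 - a1 + n1 - l2 + a2 - n2
  have hF := periodic_const (dehom g - (dehom g).comp (-Polynomial.X)) (by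
    intro n
    have := hper 1 ((n : ℂ) + 1 + 1)
    rw [add_sub_cancel_right] at this
    simp only [Polynomial.eval_sub, Polynomial.eval_comp, Polynomial.eval_neg, Polynomial.eval_X,
      dehom_eval]
    exact this.symm)
  have h0 := hF 0
  simp only [Polynomial.eval_sub, Polynomial.eval_comp, Polynomial.eval_neg, Polynomial.eval_X,
      dehom_eval] at hF h0
  rw [neg_zero, sub_self] at h0
  by_cases hx : x = 0
  · subst hx
    have := hN 0 y
    rwa [neg_zero] at this
  · have h1 := hF (y / x)
    rw [← h0] at h1
    have e1 := eval_hom hg x 1 (y / x)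
    have e2 := eval_hom hg x 1 (-(y / x))
    rw [mul_one, mul_div_cancel₀ _ hx] at e1
    rw [mul_one, mul_neg, mul_div_cancel₀ _ hx] at e2
    rw [e1, e2]
    linear_combination (-x ^ w) * h1

/-- the odd polynomial `(g(1,x+1) - g(1,x-1))/3` -/
noncomputable def qq (g : MvPolynomial (Fin 2) ℂ) : Polynomial ℂ :=
  Polynomial.C (1 / 3) * ((dehom g).comp (Polynomial.X + Polynomial.C 1)
    - (dehom g).comp (Polynomial.X - Polynomial.C 1))

lemma qq_eval (g : MvPolynomial (Fin 2) ℂ) (x : ℂ) :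
    (qq g).eval x = (1 / 3) * (eval ![1, x + 1] g - eval ![1, x - 1] g) := by
  simp [qq, dehom_eval]

lemma qq_deg {w : ℕ} {g : MvPolynomial (Fin 2) ℂ} (hg : g.IsHomogeneous w) :
    (qq g).natDegree ≤ w := by
  unfold qq
  refine (Polynomial.natDegree_C_mul_le _ _).trans ?_
  refine (Polynomial.natDegree_sub_le _ _).trans (max_le ?_ ?_)
  · refine Polynomial.natDegree_comp_le.trans ?_
    rw [Polynomial.natDegree_X_add_C, mul_one]
    exact dehom_deg hg
  · refine Polynomial.natDegree_comp_le.trans ?_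
    rw [Polynomial.natDegree_X_sub_C, mul_one]
    exact dehom_deg hg

lemma qq_coeff_even {g : MvPolynomial (Fin 2) ℂ}
    (hev : ∀ x y : ℂ, eval ![x, -y] g = eval ![x, y] g) {n : ℕ} (hn : Even n) :
    (qq g).coeff n = 0 := by
  have h1 : (qq g).comp (Polynomial.C (-1) * Polynomial.X) = - qq g := by
    apply Polynomial.funext
    intro x
    rw [Polynomial.eval_comp, Polynomial.eval_neg, qq_eval]
    simp only [Polynomial.eval_mul, Polynomial.eval_C, Polynomial.eval_X, qq_eval]
    have e1 : -1 * x + 1 = -(x - 1) := by ring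
    have e2 : -1 * x - 1 = -(x + 1) := by ring
    rw [e1, e2, hev, hev]
    ring
  have h2 := congrArg (fun p => Polynomial.coeff p n) h1
  simp only [Polynomial.comp_C_mul_X_coeff, Polynomial.coeff_neg, hn.neg_one_pow] at h2
  linear_combination h2 / 2

lemma qq_sum {w : ℕ} (hw : Even w) {g : MvPolynomial (Fin 2) ℂ} (hg : g.IsHomogeneous w)
    (hev : ∀ x y : ℂ, eval ![x, -y] g = eval ![x, y] g) (x : ℂ) :
    ∑ n ∈ (Finset.range w).filter (fun n => 0 < n ∧ Odd n), (qq g).coeff n * x ^ n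
      = (qq g).eval x := by
  rw [Polynomial.eval_eq_sum_range' (Nat.lt_succ_of_le (qq_deg hg))]
  apply Finset.sum_subset
  · intro n hn
    simp only [Finset.mem_filter, Finset.mem_range] at hn ⊢
    omega
  · intro n hn hn2
    simp only [Finset.mem_filter, Finset.mem_range, Nat.succ_eq_add_one] at hn hn2
    have : Even n := by
      by_contra hx
      rw [Nat.not_even_iff_odd] at hx
      apply hn2
      refine ⟨?_, hx.pos, hx⟩
      rcases Nat.lt_succ_iff_lt_or_eq.mp hn with h | h
      · exact h
      · subst h
        exact absurd hw (Nat.not_even_iff_odd.mpr hx)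
    rw [qq_coeff_even hev this, zero_mul]

lemma qq_pal {w : ℕ} {g : MvPolynomial (Fin 2) ℂ} (hg : g.IsHomogeneous w)
    (hA : ∀ x y : ℂ, eval ![x, y] g + eval ![y, x] g = 0)
    (hL : ∀ x y : ℂ, eval ![x, y] g = eval ![x, x + y] g + eval ![x + y, y] g)
    (hev : ∀ x y : ℂ, eval ![x, -y] g = eval ![x, y] g) {x : ℂ} (hx : x ≠ 0) :
    x ^ w * (qq g).eval (1 / x) = (qq g).eval x := by
  rw [qq_eval, qq_eval]
  have e1 := eval_hom hg x 1 (1 / x + 1)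
  have e2 := eval_hom hg x 1 (1 / x - 1)
  have f1 : x * (1 / x + 1) = 1 + x := by field_simp
  have f2 : x * (1 / x - 1) = 1 - x := by field_simp
  rw [mul_one, f1] at e1
  rw [mul_one, f2] at e2
  have l1 := hL 1 x
  have l2 := hL 1 (-x)
  have a1 := hA (1 + x) x
  have a2 := hA (1 - x) (-x)
  have v1 := hev 1 x
  have v2 := hev 1 (x - 1)
  rw [neg_sub] at v2
  rw [← sub_eq_add_neg] at l2
  have v3 : eval ![-x, 1 - x] g = eval ![x, 1 - x] g := by
    linear_combination hA (-x) (1 - x) - hA x (1 - x) - hev (1 - x) x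
  rw [add_comm x 1]
  linear_combination (1 / 3) * (l1 - l2 - a2 + a1 + v1 - v2 + v3 - e1 + e2)

theorem even_symbol_linear_combination (w : ℕ) (hw : Even w) (hw0 : 0 < w)
    (E : ℤ → ℤ → ℂ) (hE : IsDedekindSymbol w E)
    (heven : ∀ h k : ℤ, 0 < h → E h (-k) = E h k)
    (g : MvPolynomial (Fin 2) ℂ) (hg : g.IsHomogeneous w)
    (hrec : ∀ h k : ℤ, 0 < h → 0 < k →
      E h k - E k (-h) = eval ![(h : ℂ), (k : ℂ)] g) :
    ∃ (c : ℕ → ℂ) (a b : ℂ), ∀ h k : ℤ, 0 < h →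
      E h k = (∑ n ∈ (Finset.range w).filter (fun n => 0 < n ∧ Odd n),
          c n * EwnOdd w n h k)
        + a * (h : ℂ) ^ w + b * ((Int.gcd h k : ℕ) : ℂ) ^ w := by
  obtain ⟨hE1, hE2⟩ := hE
  have hr : ∀ h k : ℤ, 0 < h → 0 < k → E h k - E k h = eval ![(h : ℂ), (k : ℂ)] g := by
    intro h k hh hk
    rw [← hrec h k hh hk, heven k h hk]
  have hA : ∀ x y : ℂ, eval ![x, y] g + eval ![y, x] g = 0 := by
    have h0 : g + bind₁ ![X 1, X 0] g = 0 := by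
      apply ext_pos
      intro h k hh hk
      rw [map_add, eval_sub2]
      simp only [eval_X, Matrix.cons_val_zero, Matrix.cons_val_one]
      rw [← hr h k hh hk, ← hr k h hk hh]
      ring
    intro x y
    have := congrArg (eval ![x, y]) h0
    rw [map_add, eval_sub2] at this
    simpa using this
  have hL : ∀ x y : ℂ, eval ![x, y] g = eval ![x, x + y] g + eval ![x + y, y] g := by
    have h0 : g - bind₁ ![X 0, X 0 + X 1] g - bind₁ ![X 0 + X 1, X 1] g = 0 := by
      apply ext_pos
      intro h k hh hk
      rw [map_sub, map_sub, eval_sub2, eval_sub2]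
      simp only [map_add, eval_X, Matrix.cons_val_zero, Matrix.cons_val_one]
      have r1 := hr h k hh hk
      have r2 := hr h (h + k) hh (by omega)
      have r3 := hr (h + k) k (by omega) hk
      push_cast at r1 r2 r3
      rw [← r1, ← r2, ← r3]
      have s1 : E h (h + k) = E h k := by rw [add_comm, hE1 h k hh]
      have s2 : E k (h + k) = E k h := hE1 k h hk
      have s3 : E (h + k) h = E (h + k) k := by
        rw [← heven (h + k) h (by omega), ← hE1 (h + k) (-h) (by omega)]
        congr 1
        ring
      rw [s1, s2, s3]
      ring
    intro x y
    have := congrArg (eval ![x, y]) h0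
    rw [map_sub, map_sub, eval_sub2, eval_sub2] at this
    simp only [map_add, eval_X, Matrix.cons_val_zero, Matrix.cons_val_one, map_zero] at this
    linear_combination this
  have hev := G_even hw hg hA hL
  set S := (Finset.range w).filter (fun n => 0 < n ∧ Odd n) with hS
  have hSmem : ∀ n ∈ S, Odd n ∧ Odd (w - n) ∧ n ≤ w := by
    intro n hn
    simp only [hS, Finset.mem_filter, Finset.mem_range] at hn
    obtain ⟨h1, h2, h3⟩ := hn
    refine ⟨h3, ?_, h1.le⟩
    exact Nat.Even.sub_odd h1.le hw h3
  set c : ℕ → ℂ := fun n => -(qq g).coeff n / 2 with hc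
  set β : Polynomial ℂ := ∑ n ∈ S, Polynomial.C (c n) * (bp n + bp (w - n)) with hβ
  set V : Polynomial ℂ := Polynomial.C (1 / 3) * (dehom g +
    (dehom g).comp (Polynomial.X - Polynomial.C 1)) with hV
  have hβe : ∀ x, β.eval x = ∑ n ∈ S, c n * (bp n + bp (w - n)).eval x := by
    intro x
    rw [hβ, Polynomial.eval_finsetSum]
    apply Finset.sum_congr rfl
    intro n _
    rw [Polynomial.eval_mul, Polynomial.eval_C]
  have hVe : ∀ x, V.eval x = (1 / 3) * (eval ![1, x] g + eval ![1, x - 1] g) := by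
    intro x
    simp [hV, dehom_eval]
  have hconst := periodic_const (β + V) (by
    intro N
    have hx : (N : ℂ) + 1 ≠ 0 := by exact_mod_cast Nat.succ_ne_zero N
    have hβd : β.eval ((N : ℂ) + 1 + 1) - β.eval ((N : ℂ) + 1) = - (qq g).eval ((N : ℂ) + 1) := by
      have h1 := qq_sum hw hg hev ((N : ℂ) + 1)
      have h2 := qq_sum hw hg hev (1 / ((N : ℂ) + 1))
      have h3 := qq_pal hg hA hL hev hx
      have h4 : β.eval ((N : ℂ) + 1 + 1) - β.eval ((N : ℂ) + 1) =
          -(1 / 2) * (∑ n ∈ S, (qq g).coeff n * ((N : ℂ) + 1) ^ n)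
          - (1 / 2) * (((N : ℂ) + 1) ^ w *
            ∑ n ∈ S, (qq g).coeff n * (1 / ((N : ℂ) + 1)) ^ n) := by
        rw [hβe, hβe, ← Finset.sum_sub_distrib, Finset.mul_sum, Finset.mul_sum, Finset.mul_sum,
          ← Finset.sum_sub_distrib]
        apply Finset.sum_congr rfl
        intro n hn
        obtain ⟨-, -, hnw⟩ := hSmem n hn
        have b1 := bp_succ n ((N : ℚ) + 1)
        have b2 := bp_succ (w - n) ((N : ℚ) + 1)
        push_cast at b1 b2
        have b3 : ((N : ℂ) + 1) ^ (w - n) = ((N : ℂ) + 1) ^ w * (1 / ((N : ℂ) + 1)) ^ n := by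
          rw [pow_sub₀ _ hx hnw, one_div, inv_pow]
        rw [b3] at b2
        rw [Polynomial.eval_add, Polynomial.eval_add]
        simp only [hc]
        linear_combination (-(qq g).coeff n / 2) * (b1 + b2)
      rw [h1, h2, h3] at h4
      rw [h4]
      ring
    have q1 := qq_eval g ((N : ℂ) + 1)
    rw [Polynomial.eval_add, Polynomial.eval_add, hVe, hVe]
    simp only [add_sub_cancel_right] at q1 ⊢
    linear_combination hβd - q1)
  set κ := (β + V).eval 1 with hκ
  have hβV : ∀ x, β.eval x = κ - V.eval x := by
    intro x
    have := hconst x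
    rw [Polynomial.eval_add] at this
    linear_combination this
  have hhomV : ∀ h k : ℤ, 0 < h → (h : ℂ) ^ w * V.eval ((k : ℂ) / h) =
      (1 / 3) * (eval ![(h : ℂ), (k : ℂ)] g + eval ![(h : ℂ), (k : ℂ) - h] g) := by
    intro h k hh
    have hne : (h : ℂ) ≠ 0 := by exact_mod_cast hh.ne'
    rw [hVe]
    have e1 := eval_hom hg (h : ℂ) 1 ((k : ℂ) / h)
    have e2 := eval_hom hg (h : ℂ) 1 ((k : ℂ) / h - 1)
    rw [mul_one, mul_div_cancel₀ _ hne] at e1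
    rw [mul_sub, mul_one, mul_div_cancel₀ _ hne] at e2
    rw [e1, e2]
    ring
  set a : ℂ := κ - ∑ n ∈ S, c n * Kn w n with ha
  set D : ℤ → ℤ → ℂ := fun h k => E h k - (∑ n ∈ S, c n * EwnOdd w n h k) - a * (h : ℂ) ^ w
    with hD
  refine ⟨c, a, D 1 0, ?_⟩
  intro h k hh
  have key := gcd_lemma (w := w) D ?_ ?_ ?_ h.toNat h k hh le_rfl
  · rw [← key, hD]
    ring
  · intro h k hh
    simp only [hD]
    rw [hE1 h k hh]
    congr 2
    apply Finset.sum_congr rfl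
    intro n hn
    obtain ⟨h1, h2, -⟩ := hSmem n hn
    rw [Ewn_shift hh h1 h2]
  · intro h hh
    simp only [hD]
    have e1 := hE2 1 0 h one_pos hh
    rw [mul_one, mul_zero] at e1
    rw [e1, mul_sub, mul_sub, Finset.mul_sum]
    congr 1
    · congr 1
      apply Finset.sum_congr rfl
      intro n hn
      obtain ⟨h1, h2, -⟩ := hSmem n hn
      rw [Ewn_zero hh h1 h2]
      ring
    · simp
      ring
  · intro h k hh hk
    simp only [hD]
    have r1 := hr h k hh hk
    have r2 : (∑ n ∈ S, c n * EwnOdd w n h k) - (∑ n ∈ S, c n * EwnOdd w n k h) =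
        (∑ n ∈ S, c n * Kn w n) * ((h : ℂ) ^ w - (k : ℂ) ^ w)
        - ((h : ℂ) ^ w * β.eval ((k : ℂ) / h) - (k : ℂ) ^ w * β.eval ((h : ℂ) / k)) := by
      rw [hβe, hβe, ← Finset.sum_sub_distrib, Finset.sum_mul, Finset.mul_sum, Finset.mul_sum,
        ← Finset.sum_sub_distrib, ← Finset.sum_sub_distrib]
      apply Finset.sum_congr rfl
      intro n hn
      obtain ⟨h1, h2, -⟩ := hSmem n hn
      linear_combination (c n) * Ewn_rec hh hk h1 h2
    rw [hβV, hβV] at r2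
    have v1 := hhomV h k hh
    have v2 := hhomV k h hk
    have l1 := hL (h : ℂ) ((k : ℂ) - h)
    rw [add_sub_cancel] at l1
    have e1 := hev (k : ℂ) ((k : ℂ) - h)
    rw [neg_sub] at e1
    have a1 := hA (h : ℂ) (k : ℂ)
    rw [ha]
    linear_combination r1 - r2 - v1 + v2 - (1 / 3) * l1 + (1 / 3) * e1 + (1 / 3) * a1
end

section
/- Let w be a positive even integer, let n be an odd integer with 0 < n < w, set ñ = w−n, and let m be a positive prime. Then for all (h,k) ∈ ℤ⁺×ℤ: E_{w,n}(h,mk) + Σ_{b=0}^{m−1} E_{w,n}(mh,k+bh) = I_{w,n}(h,mk) + Σ_{b=0}^{m−1} I_{w,n}(mh,k+bh) − (1/(n+1))·[B̄_{n+1}(mk/h) + m^ñ·B̄_{n+1}(k/h)]·h^w − (1/(ñ+1))·[B̄_{ñ+1}(mk/h) + m^n·B̄_{ñ+1}(k/h)]·h^w + (1+m^{w+1})·((w+2)/B_{w+2})·(B_{n+1}/(n+1))·(B_{ñ+1}/(ñ+1))·h^w. In particular, E_{w,n}(1,0)·... specializing to (h,k)=(1,0): E_{w,n}(1,0·m) +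 Σ_{b=0}^{m−1} E_{w,n}(m,b) = Σ_{b=0}^{m−1} I_{w,n}(m,b) − (B_{n+1}/(n+1))·(1+m^ñ) − (B_{ñ+1}/(ñ+1))·(1+m^n) + (1+m^{w+1})·((w+2)/B_{w+2})·(B_{n+1}/(n+1))·(B_{ñ+1}/(ñ+1)). -/
open scoped Classical

theorem Bbar_add_one (N : ℕ) (x : ℚ) : Bbar N (x + 1) = Bbar N x := by
  unfold Bbar
  rw [Int.floor_add_one]
  push_cast
  rw [add_sub_add_right_eq_sub]

theorem Bbar_of_mem (N : ℕ) (x : ℚ) (h0 : 0 ≤ x) (h1 : x < 1) :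
    Bbar N x = ((Polynomial.bernoulli N).eval x : ℚ) := by
  unfold Bbar
  have : ⌊x⌋ = 0 := Int.floor_eq_zero_iff.mpr ⟨h0, h1⟩
  simp [this]

theorem bern_cast (N : ℕ) (q : ℚ) :
    bernoulliFun N (q : ℝ) = (((Polynomial.bernoulli N).eval q : ℚ) : ℝ) := by
  unfold bernoulliFun
  have := Polynomial.eval_map_apply (algebraMap ℚ ℝ) q (p := Polynomial.bernoulli N)
  simpa using this

theorem bern_mul_rat (N m : ℕ) (hm : m ≠ 0) (t : ℚ) :
    (m : ℚ) * (Polynomial.bernoulli N).eval t =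
      (m : ℚ) ^ N * ∑ b ∈ Finset.range m, (Polynomial.bernoulli N).eval ((t + b) / m) := by
  have h := bernoulliFun_mul N hm ((t / m : ℚ) : ℝ)
  have hm' : (m : ℚ) ≠ 0 := by exact_mod_cast hm
  have e1 : (m : ℝ) * ((t / m : ℚ) : ℝ) = ((t : ℚ) : ℝ) := by
    rw [show (m : ℝ) = ((m : ℚ) : ℝ) by simp, ← Rat.cast_mul, mul_div_cancel₀ _ hm']
  have e2 : ∀ b : ℕ, ((t / m : ℚ) : ℝ) + (b : ℝ) / m = (((t + b) / m : ℚ) : ℝ) := by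
    intro b; push_cast; ring
  rw [e1] at h
  simp only [e2, bern_cast] at h
  have h' : (Polynomial.bernoulli N).eval t = (m : ℚ) ^ N / m *
      ∑ b ∈ Finset.range m, (Polynomial.bernoulli N).eval ((t + b) / m) := by
    apply Rat.cast_injective (α := ℝ)
    rw [h, Rat.cast_mul, Rat.cast_div, Rat.cast_pow, Rat.cast_natCast, Rat.cast_sum]
  rw [h']
  field_simp

theorem Bbar_mul (N m : ℕ) (hm : m ≠ 0) (x : ℚ) :
    (m : ℂ) * Bbar N x = (m : ℂ) ^ N * ∑ b ∈ Finset.range m, Bbar N ((x + b) / m) := by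
  have hm' : (m : ℚ) ≠ 0 := by exact_mod_cast hm
  have hmp : (0 : ℚ) < m := by positivity
  set G : ℚ → ℂ := fun t => (m : ℂ) * Bbar N t - (m : ℂ) ^ N * ∑ b ∈ Finset.range m, Bbar N ((t + b) / m)
    with hG
  have hper : Function.Periodic G 1 := by
    intro t
    simp only [hG]
    rw [Bbar_add_one]
    congr 2
    have a1 := Finset.sum_range_succ (fun b : ℕ => Bbar N ((t + b) / m)) m
    have a2 := Finset.sum_range_succ' (fun b : ℕ => Bbar N ((t + b) / m)) m
    have a3 : Bbar N ((t + m) / m) = Bbar N ((t + (0 : ℕ)) / m) := by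
      rw [add_div, div_self hm', Bbar_add_one]; simp
    rw [a2] at a1
    rw [a3] at a1
    rw [← add_right_cancel a1]
    refine Finset.sum_congr rfl fun b _ => ?_
    congr 2; push_cast; ring
  have h1 : G (Int.fract x) = 0 := by
    simp only [hG]
    have f0 := Int.fract_nonneg x
    have f1 := Int.fract_lt_one x
    rw [Bbar_of_mem _ _ f0 f1, Finset.sum_congr rfl (g := fun b : ℕ =>
      (((Polynomial.bernoulli N).eval ((Int.fract x + b) / m) : ℚ) : ℂ))]
    · have := bern_mul_rat N m hm (Int.fract x)
      rw [sub_eq_zero]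
      exact_mod_cast this
    · intro b hb
      have hb' : (b : ℚ) + 1 ≤ m := by exact_mod_cast Finset.mem_range.mp hb
      apply Bbar_of_mem
      · positivity
      · rw [div_lt_one hmp]; linarith
  have h2 : G x = 0 := by
    rw [← h1]
    have := hper.sub_zsmul_eq (x := x) ⌊x⌋
    rw [← this]
    rw [zsmul_eq_mul, mul_one, Int.self_sub_floor]
  exact sub_eq_zero.mp h2

theorem Bbar_sum (w p q m : ℕ) (hpq : p + q = w) (hm : m ≠ 0) (h k : ℤ) (hh : 0 < h) :
    ∑ b ∈ Finset.range m, Bbar (p + 1) (((k + (b : ℤ) * h : ℤ) : ℚ) / ((m : ℤ) * h : ℤ))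
      * (((m : ℤ) * h : ℤ) : ℂ) ^ w = (m : ℂ) ^ q * Bbar (p + 1) ((k : ℚ) / h) * (h : ℂ) ^ w := by
  have key := Bbar_mul (p + 1) m hm ((k : ℚ) / h)
  have hm' : (m : ℚ) ≠ 0 := by exact_mod_cast hm
  have hmc : (m : ℂ) ≠ 0 := by exact_mod_cast hm
  have hh' : (h : ℚ) ≠ 0 := by exact_mod_cast hh.ne'
  have e : ∀ b : ℕ, ((k + (b : ℤ) * h : ℤ) : ℚ) / ((m : ℤ) * h : ℤ) = ((k : ℚ) / h + b) / m := by
    intro b; push_cast; field_simp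
  simp only [e]
  rw [← Finset.sum_mul]
  rw [pow_succ', mul_assoc] at key
  have key := mul_left_cancel₀ hmc key
  rw [key, ← hpq]
  push_cast
  ring

theorem Iwn_one_zero (w n : ℕ) : Iwn w n 1 0 = 0 := by
  unfold Iwn
  rw [finsum_eq_zero_of_forall_eq_zero, mul_zero]
  rintro ⟨a, b, c, d⟩
  rw [if_neg]
  rintro ⟨h1, h2, h3, h4, h5, h6, h7, h8⟩
  have hf : ⌊((0 : ℤ) : ℚ) / (1 : ℤ) + 1 / 2⌋ = 0 := by norm_num
  simp only [hf] at *
  simp only [zero_mul, add_zero] at h4 h6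
  have ha := abs_le.mp h5
  have hc := abs_le.mp h7
  have hb := abs_le.mp (h4.trans h5)
  have hd := abs_le.mp (h6.trans h7)
  obtain ⟨ha1, ha2⟩ := ha
  obtain ⟨hb1, hb2⟩ := hb
  obtain ⟨hc1, hc2⟩ := hc
  obtain ⟨hd1, hd2⟩ := hd
  interval_cases a <;> interval_cases c <;> interval_cases b <;> interval_cases d <;>
    first | omega | (norm_num at h8)

/-- Hecke-operator computation for `E_{w,n}` (`n` odd, `0 < n < w`, `m` prime):
the general formula for `(T_m E_{w,n})(h,k) = E_{w,n}(h,mk) + ∑_{b=0}^{m−1} E_{w,n}(mh,k+bh)`,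
together with its specialization at `(h,k) = (1,0)`. -/
theorem heckeT_EwnOdd (w n m : ℕ) (hw : Even w) (hw0 : 0 < w)
    (hn : Odd n) (hn0 : 0 < n) (hnw : n < w) (hm : m.Prime) :
    (∀ h k : ℤ, 0 < h →
      EwnOdd w n h ((m : ℤ) * k) + ∑ b ∈ Finset.range m, EwnOdd w n ((m : ℤ) * h) (k + (b : ℤ) * h)
        = Iwn w n h ((m : ℤ) * k) + (∑ b ∈ Finset.range m, Iwn w n ((m : ℤ) * h) (k + (b : ℤ) * h))
          - (1 / ((n : ℂ) + 1)) *
              (Bbar (n + 1) ((m : ℚ) * k / h) + (m : ℂ) ^ (w - n) * Bbar (n + 1) ((k : ℚ) / h))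
              * (h : ℂ) ^ w
          - (1 / (((w - n : ℕ) : ℂ) + 1)) *
              (Bbar (w - n + 1) ((m : ℚ) * k / h) + (m : ℂ) ^ n * Bbar (w - n + 1) ((k : ℚ) / h))
              * (h : ℂ) ^ w
          + (1 + (m : ℂ) ^ (w + 1)) * (((w : ℂ) + 2) / Bnum (w + 2))
              * (Bnum (n + 1) / ((n : ℂ) + 1)) * (Bnum (w - n + 1) / (((w - n : ℕ) : ℂ) + 1))
              * (h : ℂ) ^ w) ∧
    (EwnOdd w n 1 0 + ∑ b ∈ Finset.range m, EwnOdd w n (m : ℤ) (b : ℤ)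
      = (∑ b ∈ Finset.range m, Iwn w n (m : ℤ) (b : ℤ))
        - Bnum (n + 1) / ((n : ℂ) + 1) * (1 + (m : ℂ) ^ (w - n))
        - Bnum (w - n + 1) / (((w - n : ℕ) : ℂ) + 1) * (1 + (m : ℂ) ^ n)
        + (1 + (m : ℂ) ^ (w + 1)) * (((w : ℂ) + 2) / Bnum (w + 2))
            * (Bnum (n + 1) / ((n : ℂ) + 1)) * (Bnum (w - n + 1) / (((w - n : ℕ) : ℂ) + 1))) := by
  have hm0 := hm.ne_zero
  have hwn : n + (w - n) = w := by omega
  have hwn' : (w - n) + n = w := by omega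
  have gen : ∀ h k : ℤ, 0 < h → ∑ b ∈ Finset.range m, EwnOdd w n ((m : ℤ) * h) (k + (b : ℤ) * h)
      = (∑ b ∈ Finset.range m, Iwn w n ((m : ℤ) * h) (k + (b : ℤ) * h))
        - (1 / ((n : ℂ) + 1)) * ((m : ℂ) ^ (w - n) * Bbar (n + 1) ((k : ℚ) / h) * (h : ℂ) ^ w)
        - (1 / (((w - n : ℕ) : ℂ) + 1)) *
            ((m : ℂ) ^ n * Bbar (w - n + 1) ((k : ℚ) / h) * (h : ℂ) ^ w)
        + (m : ℂ) ^ (w + 1) * (((w : ℂ) + 2) / Bnum (w + 2))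
              * (Bnum (n + 1) / ((n : ℂ) + 1)) * (Bnum (w - n + 1) / (((w - n : ℕ) : ℂ) + 1))
              * (h : ℂ) ^ w := by
    intro h k hh
    rw [← Bbar_sum w n (w - n) m hwn hm0 h k hh, ← Bbar_sum w (w - n) n m hwn' hm0 h k hh]
    simp only [EwnOdd, Finset.sum_add_distrib, Finset.sum_sub_distrib, Finset.mul_sum]
    rw [Finset.sum_const, Finset.card_range, nsmul_eq_mul]
    congr 1
    · congr 1
      · congr 1
        refine Finset.sum_congr rfl fun b _ => ?_
        ring
      · refine Finset.sum_congr rfl fun b _ => ?_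
        ring
    · push_cast; ring
  refine ⟨fun h k hh => ?_, ?_⟩
  · rw [gen h k hh]
    simp only [EwnOdd]
    push_cast
    ring
  · have g := gen 1 0 one_pos
    simp only [mul_one, zero_add] at g
    rw [g]
    simp only [EwnOdd, Iwn_one_zero]
    have hB : ∀ N, Bbar N (((0 : ℤ) : ℚ) / ((1 : ℤ) : ℚ)) = Bnum N := by
      intro N
      rw [Bbar_of_mem _ _ (by simp) (by simp)]
      simp [Bnum]
    rw [hB, hB]
    push_cast
    ring
end

section
/- Let n be a positive prime. Then Ramanujan's tau function satisfies τ(n) = 1 + n^{11} + (691/756)·(n^5 − n^{11}) − (691/6)·Σ_{i=0}^{n−1} J_n(i), where for each i, J_n(i) = (1/2)·Σ sgn(i/n + b/a)·(ai+bn)^5·(ci+dn)^5, the inner sum ranging over all (a,b,c,d) ∈ ℤ⁴ with ad−bc=1, a≠0, c≠0, |a| ≤ 2n, |b| ≤ 2n, |c| ≤ 2n, |d| ≤ 2n, and (i/n+b/a)(i/n+d/c) < 0 (the factor 1/2 accounts for the quotient of SL(2,ℤ) by ±1, the summand being invariant under negating (a,b,c,d)). -/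
open scoped Classical
open Complex Real UpperHalfPlane

/-- The inner sum `J_n(i) = (1/2)·∑ sgn(i/n + b/a)·(ai+bn)^5·(ci+dn)^5`, over quadruples
`(a,b,c,d) ∈ ℤ⁴` with `ad−bc = 1`, `a ≠ 0`, `c ≠ 0`, `|a|,|b|,|c|,|d| ≤ 2n` and
`(i/n+b/a)(i/n+d/c) < 0`; the factor `1/2` accounts for the quotient of `SL(2,ℤ)`
by `±1` (the summand being invariant under negating `(a,b,c,d)`). -/
noncomputable def Jn (n i : ℕ) : ℂ :=
  (1 / 2) * ∑ᶠ p : ℤ × ℤ × ℤ × ℤ,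
    if p.1 * p.2.2.2 - p.2.1 * p.2.2.1 = 1 ∧ p.1 ≠ 0 ∧ p.2.2.1 ≠ 0 ∧
        |p.1| ≤ 2 * (n : ℤ) ∧ |p.2.1| ≤ 2 * (n : ℤ) ∧
        |p.2.2.1| ≤ 2 * (n : ℤ) ∧ |p.2.2.2| ≤ 2 * (n : ℤ) ∧
        ((i : ℚ) / n + p.2.1 / p.1) * ((i : ℚ) / n + p.2.2.2 / p.2.2.1) < 0 then
      (Real.sign ((i : ℝ) / n + (p.2.1 : ℝ) / p.1) : ℂ) *
        ((p.1 * i + p.2.1 * n : ℤ) : ℂ) ^ 5 * ((p.2.2.1 * i + p.2.2.2 * n : ℤ) : ℂ) ^ 5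
    else 0

section
open ModularForm EisensteinSeries ModularFormClass MatrixGroups

lemma tau_coeff (τ : ℕ → ℂ)
    (hτ : ∀ z : ℍ,
      ∑' m : ℕ, τ (m + 1) * Complex.exp (2 * π * Complex.I * (m + 1) * z)
        = Complex.exp (2 * π * Complex.I * z)
          * ∏' m : ℕ, (1 - Complex.exp (2 * π * Complex.I * (m + 1) * z)) ^ 24)
    (n : ℕ) (hn : n ≠ 0) : τ n = (qExpansion 1 CuspForm.discriminant).coeff n := by
  have key : ∀ z : ℍ, HasSum (fun m : ℕ => (if m = 0 then 0 else τ m) •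
      Function.Periodic.qParam (1:ℝ) z ^ m) (CuspForm.discriminant z) := by
    intro z
    have hD : CuspForm.discriminant z = ∑' m : ℕ, τ (m + 1) *
        Complex.exp (2 * π * Complex.I * (m + 1) * z) := by
      rw [hτ]
      refine (discriminant_eq_q_prod z).trans ?_
      simp_rw [eta_q_eq_cexp]
      simp [Function.Periodic.qParam]
    have hS : Summable (fun m : ℕ => τ (m + 1) *
        Complex.exp (2 * π * Complex.I * (m + 1) * z)) := by
      by_contra h
      rw [tsum_eq_zero_of_not_summable h] at hD
      exact discriminant_ne_zero z hD
    rw [← hasSum_nat_add_iff' 1]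
    have h2 := hS.hasSum
    rw [← hD] at h2
    simp only [← eta_q_eq_cexp] at h2
    simpa [eta_q] using h2
  have := ModularFormClass.qExpansion_coeff_unique one_pos one_mem_strictPeriods_SL key n
  simpa [hn] using this

noncomputable def formE12 : ModularForm 𝒮ℒ 12 := E (by norm_num : 3 ≤ 12)

noncomputable def formE66 : ModularForm 𝒮ℒ 12 := ModularForm.mcast (by decide) (E₆.pow 2)

noncomputable def formD : ModularForm 𝒮ℒ 12 := (CuspForm.discriminant : ModularForm 𝒮ℒ 12)

noncomputable def auxForm : ModularForm 𝒮ℒ 12 :=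
  formE12 - formE66 - (762048 / 691 : ℂ) • formD

lemma auxForm_q : qExpansion 1 auxForm = qExpansion 1 (E (by norm_num : 3 ≤ 12)) -
    qExpansion 1 E₆ * qExpansion 1 E₆ - (762048 / 691 : ℂ) • qExpansion 1 CuspForm.discriminant := by
  have h2 : qExpansion 1 formE66 = qExpansion 1 E₆ * qExpansion 1 E₆ := by
    simp only [formE66, coe_mcast,
      ModularForm.qExpansion_pow one_pos one_mem_strictPeriods_SL]
    ring
  have h1 : qExpansion 1 formE12 = qExpansion 1 (E (by norm_num : 3 ≤ 12)) := rfl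
  have h3 : qExpansion 1 formD = qExpansion 1 CuspForm.discriminant := rfl
  rw [← h1, ← h2, ← h3]
  simp only [auxForm, FunLike.coe_sub, FunLike.coe_smul]
  rw [← FunLike.coe_smul, ← FunLike.coe_sub, 
    ModularForm.qExpansion_sub one_pos one_mem_strictPeriods_SL, FunLike.coe_sub,
    ModularForm.qExpansion_sub one_pos one_mem_strictPeriods_SL, FunLike.coe_smul,
    ModularForm.qExpansion_smul one_pos one_mem_strictPeriods_SL]

lemma E12c (m : ℕ) : (qExpansion 1 (E (by norm_num : 3 ≤ 12))).coeff m =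
    if m = 0 then 1 else (65520 / 691 : ℂ) * (ArithmeticFunction.sigma 11 m) := by
  rw [E_qExpansion_coeff _ ⟨6, rfl⟩]
  norm_num [show bernoulli 12 = -691 / 2730 by decide +kernel]

lemma E6c (m : ℕ) : (qExpansion 1 E₆).coeff m =
    if m = 0 then 1 else (-504 : ℂ) * (ArithmeticFunction.sigma 5 m) := by
  rw [E_qExpansion_coeff _ ⟨3, rfl⟩]
  norm_num [show bernoulli 6 = 1 / 42 by decide +kernel]

lemma auxForm_zero : auxForm = 0 := by
  apply sturm_bound_levelOne
  have : ((2 : ℕ) : ℕ∞) ≤ (qExpansion 1 auxForm).order := by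
    apply PowerSeries.nat_le_order
    intro i hi
    have hD0 : (qExpansion 1 CuspForm.discriminant).coeff 0 = 0 :=
      CuspFormClass.qExpansion_coeff_zero CuspForm.discriminant one_pos
        one_mem_strictPeriods_SL
    have hD1 : (qExpansion 1 CuspForm.discriminant).coeff 1 = 1 :=
      discriminant_qExpansion_coeff_one
    rw [auxForm_q, map_sub, map_sub, PowerSeries.coeff_smul, E12c, PowerSeries.coeff_mul]
    interval_cases i
    · simp only [Finset.Nat.antidiagonal_zero, Finset.sum_singleton, E6c, hD0]
      simp
    · simp only [Finset.Nat.antidiagonal_succ, Finset.Nat.antidiagonal_zero, Finset.sum_cons,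
        Finset.map_singleton, Finset.sum_singleton, E6c, hD1]
      norm_num [E6c]
  refine lt_of_lt_of_le ?_ this
  exact_mod_cast (by decide : Int.toNat 12 / 12 < 2)

lemma disc_coeff (n : ℕ) (hn : n ≠ 0) : (qExpansion 1 CuspForm.discriminant).coeff n =
    65 / 756 * (ArithmeticFunction.sigma 11 n : ℂ) + 691 / 756 * (ArithmeticFunction.sigma 5 n : ℂ)
    - 691 / 3 * ∑ p ∈ Finset.HasAntidiagonal.antidiagonal n,
      (ArithmeticFunction.sigma 5 p.1 : ℂ) * (ArithmeticFunction.sigma 5 p.2 : ℂ) := by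
  have h := congrArg (PowerSeries.coeff n) auxForm_q
  have h0 : qExpansion 1 (auxForm : ℍ → ℂ) = 0 := by
    rw [auxForm_zero]; exact qExpansion_zero 1
  rw [h0, map_sub, map_sub, PowerSeries.coeff_smul, E12c, PowerSeries.coeff_mul] at h
  have h2 : ∑ p ∈ Finset.HasAntidiagonal.antidiagonal n, (qExpansion 1 E₆).coeff p.1 * (qExpansion 1 E₆).coeff p.2
      = -1008 * (ArithmeticFunction.sigma 5 n : ℂ) + 504 ^ 2 * ∑ p ∈ Finset.HasAntidiagonal.antidiagonal n,
      (ArithmeticFunction.sigma 5 p.1 : ℂ) * (ArithmeticFunction.sigma 5 p.2 : ℂ) := by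
    obtain ⟨m, rfl⟩ : ∃ m, n = m + 1 := ⟨n - 1, by omega⟩
    have e : ∀ i, (qExpansion 1 E₆).coeff i = (if i = 0 then 1 else 0) +
        (-504 : ℂ) * (ArithmeticFunction.sigma 5 i) := by
      intro i; rw [E6c]; split_ifs with hi <;> simp [hi]
    simp only [e]
    rw [Finset.mul_sum]
    simp only [add_mul, mul_add, Finset.sum_add_distrib]
    have k1 : ∑ x ∈ Finset.HasAntidiagonal.antidiagonal (m+1), (if x.1 = 0 then (1:ℂ) else 0) *
        (-504 * (ArithmeticFunction.sigma 5 x.2 : ℂ)) = -504 * ArithmeticFunction.sigma 5 (m+1) := by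
      rw [Finset.sum_eq_single (0, m+1)]
      · simp
      · rintro ⟨a, b⟩ hab hne
        rw [Finset.HasAntidiagonal.mem_antidiagonal] at hab
        have : a ≠ 0 := by rintro rfl; apply hne; simp at hab; simp [hab]
        simp [this]
      · simp
    have k2 : ∑ x ∈ Finset.HasAntidiagonal.antidiagonal (m+1), (-504 * (ArithmeticFunction.sigma 5 x.1 : ℂ)) *
        (if x.2 = 0 then (1:ℂ) else 0) = -504 * ArithmeticFunction.sigma 5 (m+1) := by
      rw [Finset.sum_eq_single (m+1, 0)]
      · simp
      · rintro ⟨a, b⟩ hab hne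
        rw [Finset.HasAntidiagonal.mem_antidiagonal] at hab
        have : b ≠ 0 := by rintro rfl; apply hne; simp at hab; simp [hab]
        simp [this]
      · simp
    have k3 : ∑ x ∈ Finset.HasAntidiagonal.antidiagonal (m+1), (if x.1 = 0 then (1:ℂ) else 0) *
        (if x.2 = 0 then (1:ℂ) else 0) = 0 := by
      apply Finset.sum_eq_zero
      rintro ⟨a, b⟩ hab
      rw [Finset.HasAntidiagonal.mem_antidiagonal] at hab
      dsimp only at hab ⊢
      split_ifs <;> first | omega | simp
    rw [k1, k2, k3]
    have k4 : ∑ x ∈ Finset.HasAntidiagonal.antidiagonal (m+1), (-504 * (ArithmeticFunction.sigma 5 x.1 : ℂ)) *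
        (-504 * (ArithmeticFunction.sigma 5 x.2 : ℂ)) = ∑ x ∈ Finset.HasAntidiagonal.antidiagonal (m+1), 504 ^ 2 *
        ((ArithmeticFunction.sigma 5 x.1 : ℂ) * (ArithmeticFunction.sigma 5 x.2 : ℂ)) :=
      Finset.sum_congr rfl fun _ _ => by ring
    rw [k4]; ring
  rw [h2, if_neg hn] at h
  simp only [map_zero, smul_eq_mul] at h
  linear_combination (691 / 762048 : ℂ) * h
end

lemma sum_anti (z : ℤ) : ∑ p ∈ Int.divisorsAntidiag z, ((|p.2| : ℤ) : ℂ) ^ 5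
    = 2 * (ArithmeticFunction.sigma 5 z.natAbs : ℂ) := by
  have h : ∑ p ∈ Int.divisorsAntidiag z, ((|p.2| : ℤ) : ℂ) ^ 5 =
      ∑ d ∈ Int.divisors z, ((|d| : ℤ) : ℂ) ^ 5 := by
    rw [← Int.image_snd_divisorsAntidiag, Finset.sum_image]
    rintro ⟨a, b⟩ h1 ⟨c, d⟩ h2 h3
    simp only [Finset.mem_coe, Int.mem_divisorsAntidiag] at h1 h2 h3
    subst h3
    have hb : b ≠ 0 := by rintro rfl; apply h1.2; rw [← h1.1, mul_zero]
    have : a * b = c * b := h1.1.trans h2.1.symm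
    rw [mul_right_cancel₀ hb this]
  rw [h, Int.divisors, Finset.sum_disjUnion, Finset.sum_map, Finset.sum_map,
    ArithmeticFunction.sigma_apply]
  simp [two_mul]

lemma Jn_eq (n i : ℕ) : Jn n i = (1 / 2) * ∑ p ∈ (Finset.Icc (-(2 * (n:ℤ))) (2 * n) ×ˢ
    Finset.Icc (-(2 * (n:ℤ))) (2 * n) ×ˢ Finset.Icc (-(2 * (n:ℤ))) (2 * n) ×ˢ
    Finset.Icc (-(2 * (n:ℤ))) (2 * n)), 
    if p.1 * p.2.2.2 - p.2.1 * p.2.2.1 = 1 ∧ p.1 ≠ 0 ∧ p.2.2.1 ≠ 0 ∧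
        |p.1| ≤ 2 * (n : ℤ) ∧ |p.2.1| ≤ 2 * (n : ℤ) ∧
        |p.2.2.1| ≤ 2 * (n : ℤ) ∧ |p.2.2.2| ≤ 2 * (n : ℤ) ∧
        ((i : ℚ) / n + p.2.1 / p.1) * ((i : ℚ) / n + p.2.2.2 / p.2.2.1) < 0 then
      (Real.sign ((i : ℝ) / n + (p.2.1 : ℝ) / p.1) : ℂ) *
        ((p.1 * i + p.2.1 * n : ℤ) : ℂ) ^ 5 * ((p.2.2.1 * i + p.2.2.2 * n : ℤ) : ℂ) ^ 5
    else 0 := by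
  rw [Jn, finsum_eq_sum_of_support_subset]
  intro p hp
  rw [Function.mem_support] at hp
  have := (ite_ne_right_iff.mp hp).1
  obtain ⟨-, -, -, h1, h2, h3, h4, -⟩ := this
  simp only [Finset.coe_product, Set.mem_prod, Finset.coe_Icc, Set.mem_Icc]
  exact ⟨abs_le.mp h1, abs_le.mp h2, abs_le.mp h3, abs_le.mp h4⟩

/-- rational sign condition in integer terms -/
lemma cond_iff_s17 (n i : ℕ) (hn : 0 < n) (a b c d : ℤ) (ha : a ≠ 0) (hc : c ≠ 0) :
    ((i : ℚ) / n + b / a) * ((i : ℚ) / n + d / c) < 0 ↔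
      ((a * i + b * n) * a) * ((c * i + d * n) * c) < 0 := by
  have hn' : (n : ℚ) ≠ 0 := by positivity
  have ha' : (a : ℚ) ≠ 0 := by exact_mod_cast ha
  have hc' : (c : ℚ) ≠ 0 := by exact_mod_cast hc
  have e : ((i : ℚ) / n + b / a) * ((i : ℚ) / n + d / c) =
      (((a * i + b * n) * a) * ((c * i + d * n) * c) : ℤ) / ((n * a * c) ^ 2 : ℚ) := by
    push_cast
    field_simp
    try ring
  rw [e, div_neg_iff]
  have hp : (0:ℚ) < (n * a * c) ^ 2 := by positivity
  have : ¬ (n * a * c : ℚ) ^ 2 < 0 := not_lt.mpr hp.le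
  simp only [this, and_false, false_or, hp, and_true]
  exact_mod_cast Iff.rfl

lemma sign_val (n i : ℕ) (hn : 0 < n) (a b y : ℤ) (h : 0 < a * y) :
    (Real.sign ((i : ℝ) / n + (b : ℝ) / a) : ℂ) *
        ((a * i + b * n : ℤ) : ℂ) ^ 5 * ((y : ℤ) : ℂ) ^ 5 =
      ((|y| : ℤ) : ℂ) ^ 5 * ((|a * i + b * n| : ℤ) : ℂ) ^ 5 := by
  have ha : a ≠ 0 := by rintro rfl; simp at h
  have hn' : (0 : ℝ) < n := by positivity
  have ha' : (a : ℝ) ≠ 0 := by exact_mod_cast ha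
  have e : (i : ℝ) / n + (b : ℝ) / a = ((a * i + b * n : ℤ) : ℝ) / (n * a) := by
    push_cast; field_simp
  rw [e]
  generalize a * i + b * n = x
  rcases pos_and_pos_or_neg_and_neg_of_mul_pos h with ⟨h1, h2⟩ | ⟨h1, h2⟩ <;>
  rcases lt_trichotomy x 0 with hx | hx | hx
  · have : ((x : ℤ) : ℝ) / (n * a) < 0 := div_neg_of_neg_of_pos (by exact_mod_cast hx) (mul_pos hn' (by exact_mod_cast h1))
    rw [Real.sign_of_neg this, abs_of_pos h2, abs_of_neg hx]; push_cast; ring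
  · subst hx; simp
  · have : 0 < ((x : ℤ) : ℝ) / (n * a) := div_pos (by exact_mod_cast hx) (mul_pos hn' (by exact_mod_cast h1))
    rw [Real.sign_of_pos this, abs_of_pos h2, abs_of_pos hx]; push_cast; ring
  · have : 0 < ((x : ℤ) : ℝ) / (n * a) := div_pos_of_neg_of_neg (by exact_mod_cast hx) (mul_neg_of_pos_of_neg hn' (by exact_mod_cast h1))
    rw [Real.sign_of_pos this, abs_of_neg h2, abs_of_neg hx]; push_cast; ring
  · subst hx; simp
  · have : ((x : ℤ) : ℝ) / (n * a) < 0 := div_neg_of_pos_of_neg (by exact_mod_cast hx) (mul_neg_of_pos_of_neg hn' (by exact_mod_cast h1))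
    rw [Real.sign_of_neg this, abs_of_neg h2, abs_of_pos hx]; push_cast; ring

lemma forward (n i : ℕ) (hn : 0 < n) (a b c d : ℤ) (h : a * d - b * c = 1)
    (hneg : ((a * i + b * n) * a) * ((c * i + d * n) * c) < 0) :
    0 < a * (c * i + d * n) ∧ c * (a * i + b * n) < 0 ∧
      a * (c * i + d * n) - c * (a * i + b * n) = n := by
  have e : a * (c * i + d * n) - c * (a * i + b * n) = n := by linear_combination (n : ℤ) * h
  have hn' : (0 : ℤ) < n := by exact_mod_cast hn
  have h2 : (a * (c * i + d * n)) * (c * (a * i + b * n)) < 0 := by linarith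
  rcases mul_neg_iff.mp h2 with ⟨h3, h4⟩ | ⟨h3, h4⟩
  · exact ⟨h3, h4, e⟩
  · linarith

lemma backward (n : ℕ) (hn : n.Prime) (a x c y : ℤ) (h1 : 0 < a * y) (h2 : c * x < 0)
    (h : a * y - c * x = n) : ∃ i : ℕ, i < n ∧ ∃ b d : ℤ, a * i + b * n = x ∧ c * i + d * n = y ∧
      a * d - b * c = 1 ∧ |a| ≤ 2 * (n:ℤ) ∧ |b| ≤ 2 * (n:ℤ) ∧ |c| ≤ 2 * (n:ℤ) ∧ |d| ≤ 2 * (n:ℤ) := by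
  have hn' : (0 : ℤ) < n := by exact_mod_cast hn.pos
  have ha : a ≠ 0 := by rintro rfl; simp at h1
  have hy : y ≠ 0 := by rintro rfl; simp at h1
  have hc : c ≠ 0 := by rintro rfl; simp at h2
  have hx : x ≠ 0 := by rintro rfl; simp at h2
  have bd : ∀ u v : ℤ, u ≠ 0 → v ≠ 0 → |u * v| < n → |u| < n ∧ |v| < n := by
    intro u v hu hv huv
    rw [abs_mul] at huv
    have := Int.one_le_abs hu
    have := Int.one_le_abs hv
    constructor <;> nlinarith
  obtain ⟨ba, by'⟩ := bd a y ha hy (by rw [abs_of_pos h1]; linarith)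
  obtain ⟨bc, bx⟩ := bd c x hc hx (by rw [abs_of_neg h2]; linarith)
  have hp : Prime (n : ℤ) := Nat.prime_iff_prime_int.mp hn
  have hnd : ¬ (n : ℤ) ∣ a := fun hd => by
    have := Int.le_of_dvd (abs_pos.mpr ha) ((dvd_abs _ _).mpr hd)
    linarith
  have hcop : IsCoprime (n : ℤ) a := (hp.irreducible.coprime_iff_not_dvd).mpr hnd
  obtain ⟨u, v, huv⟩ := hcop
  have hi0 := Int.emod_nonneg (x * v) hn'.ne'
  have hi1 := Int.emod_lt_of_pos (x * v) hn'
  obtain ⟨i, hi⟩ := Int.eq_ofNat_of_zero_le hi0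
  have hdi := Int.emod_add_mul_ediv (x * v) n
  rw [hi] at hi1 hdi
  set q := x * v / n
  have hxa : (n : ℤ) ∣ x - a * i := ⟨x * u + a * q, by linear_combination (-x) * huv - a * hdi⟩
  obtain ⟨b, hb⟩ := hxa
  have hyc : (n : ℤ) ∣ y - c * i := by
    refine (hp.dvd_or_dvd (a := a) ?_).resolve_left hnd
    exact ⟨1 + c * b, by linear_combination h + c * hb⟩
  obtain ⟨d, hd⟩ := hyc
  have bnd : ∀ s t r : ℤ, |s| < n → |t| < n → s - t * i = n * r → |r| ≤ 2 * (n:ℤ) := by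
    intro s t r hs ht hr
    have hi0' : (0:ℤ) ≤ i := by positivity
    have h3 : |s - t * i| ≤ |s| + |t| * i := by
      calc |s - t * i| ≤ |s| + |t * i| := abs_sub _ _
        _ = _ := by rw [abs_mul, abs_of_nonneg hi0']
    rw [hr, abs_mul, abs_of_pos hn'] at h3
    have h4 : |t| * i ≤ n * n := mul_le_mul ht.le hi1.le hi0' hn'.le
    have h5 : (n:ℤ) * |r| ≤ n * (2 * n) := by nlinarith
    exact le_of_mul_le_mul_left h5 hn'
  refine ⟨i, by exact_mod_cast hi1, b, d, by linear_combination -hb, by linear_combination -hd, ?_,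
    by linarith, bnd x a b bx ba hb, by linarith, bnd y c d by' bc hd⟩
  apply mul_left_cancel₀ hn'.ne'
  linear_combination h - a * hd + c * hb

lemma inj_aux (n i j : ℕ) (hi : i < n) (hj : j < n) (a b c d b' d' : ℤ) (h : a * d - b * c = 1)
    (h1 : a * i + b * n = a * j + b' * n) (h2 : c * i + d * n = c * j + d' * n) :
    i = j ∧ b = b' ∧ d = d' := by
  have hn' : (n : ℤ) ≠ 0 := by have : 0 < n := by omega
                               positivity
  have hij : (n : ℤ) ∣ (i : ℤ) - j := by
    -- i - j = (a d - b c)(i-j)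
    refine ⟨d * (b' - b) - b * (d' - d), ?_⟩
    linear_combination (-((i:ℤ) - j)) * h + d * h1 - b * h2
  have hij' : (i : ℤ) = j := by
    have := Int.eq_zero_of_abs_lt_dvd hij (by rw [abs_lt]; constructor <;> omega)
    omega
  refine ⟨by exact_mod_cast hij', ?_, ?_⟩
  · apply mul_right_cancel₀ hn'; linear_combination h1 - a * hij'
  · apply mul_right_cancel₀ hn'; linear_combination h2 - c * hij'

lemma sum_Jn (n : ℕ) (hn : n.Prime) : ∑ i ∈ Finset.range n, Jn n i =
    2 * ∑ p ∈ Finset.HasAntidiagonal.antidiagonal n,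
      (ArithmeticFunction.sigma 5 p.1 : ℂ) * (ArithmeticFunction.sigma 5 p.2 : ℂ) := by
  simp only [Jn_eq]
  rw [← Finset.mul_sum]
  have hR : ∑ p ∈ Finset.HasAntidiagonal.antidiagonal n,
      (ArithmeticFunction.sigma 5 p.1 : ℂ) * (ArithmeticFunction.sigma 5 p.2 : ℂ) =
      (1 / 4) * ∑ k ∈ Finset.HasAntidiagonal.antidiagonal n, ∑ q ∈ Int.divisorsAntidiag (k.1 : ℤ) ×ˢ
        Int.divisorsAntidiag (-(k.2 : ℤ)), ((|q.1.2| : ℤ) : ℂ) ^ 5 * ((|q.2.2| : ℤ) : ℂ) ^ 5 := by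
    rw [Finset.mul_sum]
    refine Finset.sum_congr rfl fun k _ => ?_
    rw [Finset.sum_product, ← Finset.sum_mul_sum _ _ (fun u : ℤ × ℤ => ((|u.2| : ℤ) : ℂ) ^ 5)
      (fun u : ℤ × ℤ => ((|u.2| : ℤ) : ℂ) ^ 5), sum_anti, sum_anti]
    simp
    ring
  rw [← Finset.sum_product', hR, Finset.sum_sigma', ← Finset.sum_filter]
  suffices hs : ∀ A B : ℂ, A = B → 1 / 2 * A = 2 * (1 / 4 * B) by
    apply hs
    have hn0 := hn.pos
    refine Finset.sum_bij (fun q _ => ⟨((q.2.1 * (q.2.2.2.1 * q.1 + q.2.2.2.2 * n)).toNat,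
      (-(q.2.2.2.1 * (q.2.1 * q.1 + q.2.2.1 * n))).toNat),
      ((q.2.1, q.2.2.2.1 * q.1 + q.2.2.2.2 * n), (q.2.2.2.1, q.2.1 * q.1 + q.2.2.1 * n))⟩)
      ?_ ?_ ?_ ?_
    · rintro ⟨i, a, b, c, d⟩ hq
      simp only [Finset.mem_filter] at hq
      obtain ⟨-, hdet, ha, hc, -, -, -, -, hcond⟩ := hq
      rw [cond_iff_s17 n i hn0 a b c d ha hc] at hcond
      obtain ⟨f1, f2, f3⟩ := forward n i hn0 a b c d hdet hcond
      simp only [Finset.mem_sigma, Finset.HasAntidiagonal.mem_antidiagonal, Finset.mem_product,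
        Int.mem_divisorsAntidiag]
      generalize a * (c * i + d * n) = X at *
      generalize c * (a * i + b * n) = Y at *
      omega
    · rintro ⟨i, a, b, c, d⟩ hq ⟨i', a', b', c', d'⟩ hq' heq
      simp only [Finset.mem_filter, Finset.mem_product, Finset.mem_range] at hq hq'
      simp only [Sigma.mk.injEq, heq_eq_eq, Prod.mk.injEq] at heq
      obtain ⟨-, ⟨rfl, e2⟩, rfl, e1⟩ := heq
      obtain ⟨rfl, rfl, rfl⟩ := inj_aux n i i' hq.1.1 hq'.1.1 a b c d b' d' hq.2.1 e1 e2
      rfl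
    · rintro ⟨⟨k, l⟩, ⟨a, y⟩, c, x⟩ hq
      simp only [Finset.mem_sigma, Finset.HasAntidiagonal.mem_antidiagonal, Finset.mem_product,
        Int.mem_divisorsAntidiag] at hq
      obtain ⟨hkl, ⟨h1, h2⟩, h3, h4⟩ := hq
      have p1 : 0 < a * y := by omega
      have p2 : c * x < 0 := by omega
      obtain ⟨i, hi, b, d, rfl, rfl, hdet, ba, bb, bc, bd⟩ := backward n hn a x c y p1 p2 (by omega)
      have ha : a ≠ 0 := by rintro rfl; simp at p1
      have hc : c ≠ 0 := by rintro rfl; simp at p2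
      refine ⟨⟨i, a, b, c, d⟩, ?_, ?_⟩
      · simp only [Finset.mem_filter, Finset.mem_product, Finset.mem_range, Finset.mem_Icc]
        refine ⟨⟨hi, abs_le.mp ba, abs_le.mp bb, abs_le.mp bc, abs_le.mp bd⟩, hdet, ha, hc, ba, bb,
          bc, bd, ?_⟩
        rw [cond_iff_s17 n i hn0 a b c d ha hc]
        have := mul_neg_of_pos_of_neg p1 p2
        linarith
      · simp only [h1, h3]
        simp
    · rintro ⟨i, a, b, c, d⟩ hq
      simp only [Finset.mem_filter] at hq
      obtain ⟨-, hdet, ha, hc, -, -, -, -, hcond⟩ := hq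
      rw [cond_iff_s17 n i hn0 a b c d ha hc] at hcond
      obtain ⟨f1, f2, f3⟩ := forward n i hn0 a b c d hdet hcond
      exact sign_val n i hn0 a b _ f1
  rintro A B rfl
  ring

/-- Fukuhara's elementary formula for Ramanujan's tau function at a prime `n`,
where `τ` is characterized by `∑ τ(m)·q^m = q·∏ (1−q^m)^24`, `q = e^{2πiz}`. -/
theorem tau_formula (τ : ℕ → ℂ)
    (hτ : ∀ z : ℍ,
      ∑' m : ℕ, τ (m + 1) * Complex.exp (2 * π * Complex.I * (m + 1) * z)
        = Complex.exp (2 * π * Complex.I * z)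
          * ∏' m : ℕ, (1 - Complex.exp (2 * π * Complex.I * (m + 1) * z)) ^ 24)
    (n : ℕ) (hn : n.Prime) :
    τ n = 1 + (n : ℂ) ^ 11 + (691 / 756) * ((n : ℂ) ^ 5 - (n : ℂ) ^ 11)
      - (691 / 6) * ∑ i ∈ Finset.range n, Jn n i := by
  have hn0 := hn.ne_zero
  rw [tau_coeff τ hτ n hn0, disc_coeff n hn0, sum_Jn n hn]
  have hs : ∀ k : ℕ, k ≠ 0 → (ArithmeticFunction.sigma k n : ℂ) = 1 + (n : ℂ) ^ k := by
    intro k _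
    rw [ArithmeticFunction.sigma_apply, hn.sum_divisors]
    push_cast
    ring
  rw [hs 11 (by norm_num), hs 5 (by norm_num)]
  ring
end

section
/- Let w be a positive even integer, n a positive integer, h ∈ ℤ⁺ and k ∈ ℤ. Then the Apostol generalized Dedekind sums satisfy the identity Σ_{a,d ∈ ℤ⁺, ad=n} Σ_{b=0}^{d−1} d^w·s_{w+1}(ak+bh, dh) = σ_{w+1}(n)·s_{w+1}(k,h), where σ_{w+1}(n) = Σ_{d|n, d>0} d^{w+1}. -/
/-- Apostol's generalized Dedekind sum `s_m(k,h) = ∑_{μ=0}^{h−1} (μ/h)·B̄_m(μk/h)`,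
for `h ∈ ℤ⁺` and `k ∈ ℤ`. -/
noncomputable def apostolS (m : ℕ) (k h : ℤ) : ℂ :=
  ∑ μ ∈ Finset.range h.toNat, ((μ : ℂ) / (h : ℂ)) * Bbar m ((μ : ℚ) * (k : ℚ) / (h : ℚ))

theorem Bbar_add_int (m : ℕ) (x : ℚ) (z : ℤ) : Bbar m (x + z) = Bbar m x := by
  unfold Bbar
  rw [Int.floor_add_intCast]
  have e : x + (z : ℚ) - ((⌊x⌋ + z : ℤ) : ℚ) = x - ⌊x⌋ := by push_cast; ring
  rw [e]

theorem Bbar_neg (m : ℕ) (hm : Odd m) (hm1 : 1 < m) (x : ℚ) : Bbar m (-x) = - Bbar m x := by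
  have key : ∀ y : ℚ, 0 ≤ y → y < 1 → Bbar m (-y) = - Bbar m y := by
    intro y h0 h1
    rcases h0.eq_or_lt with h | h
    · subst h
      simp [Bbar, Polynomial.bernoulli_eval_zero, bernoulli_eq_zero_of_odd hm hm1]
    · have e1 : ⌊-y⌋ = -1 := by
        rw [Int.floor_eq_iff]; push_cast; constructor <;> linarith
      have e2 : ⌊y⌋ = 0 := by
        rw [Int.floor_eq_iff]; push_cast; constructor <;> linarith
      unfold Bbar
      rw [e1, e2]
      have : (-y - ((-1 : ℤ) : ℚ)) = 1 - y := by push_cast; ring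
      rw [this, Polynomial.bernoulli_eval_one_sub, hm.neg_one_pow]
      simp
  have h := key (Int.fract x) (Int.fract_nonneg x) (Int.fract_lt_one x)
  have a1 : Bbar m (Int.fract x) = Bbar m x := by
    rw [← Bbar_add_int m (Int.fract x) ⌊x⌋, Int.fract_add_floor]
  have a2 : Bbar m (-Int.fract x) = Bbar m (-x) := by
    rw [← Bbar_add_int m (-Int.fract x) (-⌊x⌋)]
    congr 1
    have := Int.fract_add_floor x
    push_cast
    linarith
  rw [← a1, ← a2, h]

theorem periodic_sum (q : ℕ) (hq : 0 < q) (F : ℤ → ℂ) (hF : Function.Periodic F (q : ℤ))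
    (ν z : ℤ) (hν : IsUnit ((ν : ℤ) : ZMod q)) :
    ∑ b ∈ Finset.range q, F (ν * b + z) = ∑ b ∈ Finset.range q, F b := by
  haveI : NeZero q := ⟨hq.ne'⟩
  let G : ZMod q → ℂ := fun x => F x.val
  have hG : ∀ i : ℤ, F i = G (i : ZMod q) := by
    intro i
    have h1 : ((((i : ZMod q).val : ℕ) : ℤ)) = i % q := ZMod.val_intCast i
    have h2 : i = i % q + (i / q) * q := by
      rw [mul_comm]; exact (Int.emod_add_mul_ediv i q).symm
    simp only [G]
    rw [h1]
    conv_lhs => rw [h2]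
    have := hF.int_mul (i / q) (i % q)
    simpa using this
  have hS : ∀ K : ZMod q → ℂ, ∑ b ∈ Finset.range q, K (b : ZMod q) = ∑ x : ZMod q, K x := by
    intro K
    refine Finset.sum_bij' (fun b _ => (b : ZMod q)) (fun x _ => x.val) ?_ ?_ ?_ ?_ ?_
    · intros; simp
    · intro x _; simpa using ZMod.val_lt x
    · intro b hb; exact ZMod.val_cast_of_lt (by simpa using hb)
    · intro x _; simp
    · intros; rfl
  obtain ⟨u, hu⟩ := hν
  have h1 : ∑ b ∈ Finset.range q, F (ν * b + z)
      = ∑ b ∈ Finset.range q, (fun x : ZMod q => G ((u : ZMod q) * x + z)) (b : ZMod q) := by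
    apply Finset.sum_congr rfl
    intro b _
    rw [hG, hu]
    push_cast
    rfl
  have h2 : ∑ b ∈ Finset.range q, F b = ∑ b ∈ Finset.range q, G (b : ZMod q) := by
    apply Finset.sum_congr rfl
    intro b _
    rw [hG]
    push_cast
    rfl
  rw [h1, h2, hS G, hS (fun x : ZMod q => G ((u : ZMod q) * x + z))]
  exact ((Units.mulLeft u).trans (Equiv.addRight (z : ZMod q))).sum_comp G

theorem Bbar_mult (m q : ℕ) (hq : 0 < q) (x : ℚ) :
    Bbar m (q * x) = (q : ℂ) ^ m / q * ∑ c ∈ Finset.range q, Bbar m (x + c / q) := by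
  have hq0 : (q : ℚ) ≠ 0 := by positivity
  set t := Int.fract ((q : ℚ) * x) with ht
  set z := ⌊(q : ℚ) * x⌋ with hz
  have htz : t + z = q * x := Int.fract_add_floor _
  have ht0 : 0 ≤ t := Int.fract_nonneg _
  have ht1 : t < 1 := Int.fract_lt_one _
  have hx : x = t / q + z / q := by
    field_simp; linarith
  have hp : Function.Periodic (fun c : ℤ => Bbar m (t / q + c / q)) (q : ℤ) := by
    intro c
    simp only
    rw [← Bbar_add_int m (t / q + c / q) 1]
    congr 1
    push_cast
    field_simp
    ring
  have hs := periodic_sum q hq _ hp 1 z (by simp)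
  have e1 : ∑ c ∈ Finset.range q, Bbar m (x + c / q)
      = ∑ c ∈ Finset.range q, Bbar m (t / q + c / q) := by
    have : ∀ c : ℕ, x + c / q = t / q + (((1 * (c : ℤ) + z : ℤ)) : ℚ) / q := by
      intro c; rw [hx]; push_cast; ring
    simp only [this]
    rw [hs]
    simp
  rw [e1, ← htz, Bbar_add_int]
  have fl : ∀ y : ℚ, 0 ≤ y → y < 1 → Bbar m y = ((bernoulliFun m (y : ℝ) : ℝ) : ℂ) := by
    intro y h0 h1
    have e2 : ⌊y⌋ = 0 := by
      rw [Int.floor_eq_iff]; push_cast; constructor <;> linarith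
    unfold Bbar bernoulliFun
    rw [e2]
    have : Polynomial.eval (y : ℝ) (Polynomial.map (algebraMap ℚ ℝ) (Polynomial.bernoulli m))
       = ((Polynomial.eval y (Polynomial.bernoulli m) : ℚ) : ℝ) := by
      have := Polynomial.eval_map_apply (p := Polynomial.bernoulli m) (f := algebraMap ℚ ℝ) y
      simpa using this
    rw [this]
    simp
  have hm := bernoulliFun_mul m hq.ne' ((t / q : ℚ) : ℝ)
  have e3 : (q : ℝ) * ((t / q : ℚ) : ℝ) = ((t : ℚ) : ℝ) := by
    have : (q : ℝ) ≠ 0 := by positivity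
    push_cast; field_simp
  rw [e3] at hm
  rw [fl t ht0 ht1, hm]
  push_cast
  congr 1
  apply Finset.sum_congr rfl
  intro c hc
  have hc' : (c : ℚ) + 1 ≤ q := by
    exact_mod_cast Finset.mem_range.1 hc
  have hqp : (0 : ℚ) < q := by positivity
  rw [fl (t / q + c / q) (by positivity) (by rw [← add_div, div_lt_one hqp]; linarith)]
  push_cast
  rfl

theorem periodic_sum_mul (q : ℕ) (F : ℤ → ℂ) (hF : Function.Periodic F (q : ℤ)) (g : ℕ) :
    ∑ b ∈ Finset.range (g * q), F b = g * ∑ b ∈ Finset.range q, F b := by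
  induction g with
  | zero => simp
  | succ g ih =>
    rw [Nat.succ_mul, Finset.sum_range_add, ih]
    have : ∀ b : ℕ, F ((g * q + b : ℕ) : ℤ) = F b := by
      intro b
      have := hF.nat_mul g b
      rw [← this]; congr 1; push_cast; ring
    simp only [this]
    push_cast; ring

theorem periodic_sum_mul_id (q : ℕ) (F : ℤ → ℂ) (hF : Function.Periodic F (q : ℤ))
    (h0 : ∑ b ∈ Finset.range q, F b = 0) (g : ℕ) :
    ∑ b ∈ Finset.range (g * q), (b : ℂ) * F b = g * ∑ b ∈ Finset.range q, (b : ℂ) * F b := by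
  induction g with
  | zero => simp
  | succ g ih =>
    rw [Nat.succ_mul, Finset.sum_range_add, ih]
    have : ∀ b : ℕ, F ((g * q + b : ℕ) : ℤ) = F b := by
      intro b
      have := hF.nat_mul g b
      rw [← this]; congr 1; push_cast; ring
    simp only [this]
    push_cast
    simp only [add_mul, Finset.sum_add_distrib, ← Finset.mul_sum, h0]
    ring

theorem sum_b (w d μ : ℕ) (hd : 0 < d) (x : ℚ) :
    (d : ℂ) ^ w * ∑ b ∈ Finset.range d, Bbar (w + 1) (x + μ * b / d)
      = (Nat.gcd μ d : ℂ) ^ (w + 1) * Bbar (w + 1) ((d : ℚ) / (Nat.gcd μ d) * x) := by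
  have hg : 0 < Nat.gcd μ d := Nat.gcd_pos_of_pos_right _ hd
  obtain ⟨ν, δ, hc, h1, h2⟩ := Nat.exists_coprime μ d
  set g := Nat.gcd μ d with hgdef
  have hδ : 0 < δ := Nat.pos_of_ne_zero (by rintro rfl; simp at h2; omega)
  have hgq : (g : ℚ) ≠ 0 := by positivity
  have hδq : (δ : ℚ) ≠ 0 := by positivity
  have hgc : (g : ℂ) ≠ 0 := by exact_mod_cast hg.ne'
  have hδc : (δ : ℂ) ≠ 0 := by exact_mod_cast hδ.ne'
  have hp : Function.Periodic (fun c : ℤ => Bbar (w + 1) (x + c / δ)) (δ : ℤ) := by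
    intro c
    simp only
    rw [← Bbar_add_int _ (x + c / δ) 1]
    congr 1
    push_cast
    field_simp
    ring
  have hp2 : Function.Periodic (fun c : ℤ => Bbar (w + 1) (x + ν * c / δ)) (δ : ℤ) := by
    intro c
    simp only
    rw [← Bbar_add_int _ (x + ν * c / δ) ν]
    congr 1
    push_cast
    field_simp
    ring
  have s1 : ∑ b ∈ Finset.range d, Bbar (w + 1) (x + μ * b / d)
      = g * ∑ b ∈ Finset.range δ, Bbar (w + 1) (x + ν * b / δ) := by
    have := periodic_sum_mul δ _ hp2 g
    simp only [Int.cast_natCast] at this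
    rw [← this, h2, mul_comm δ g]
    apply Finset.sum_congr rfl
    intro b _
    congr 2
    rw [h1]; push_cast; field_simp
  have s2 : ∑ b ∈ Finset.range δ, Bbar (w + 1) (x + ν * b / δ)
      = ∑ b ∈ Finset.range δ, Bbar (w + 1) (x + b / δ) := by
    have := periodic_sum δ hδ _ hp ν 0 (by
      simpa using (ZMod.isUnit_iff_coprime ν δ).2 hc)
    simpa using this
  have s3 : (d : ℚ) / g * x = δ * x := by
    rw [h2]; push_cast; field_simp
  rw [s1, s2, s3, Bbar_mult _ δ hδ, h2]
  push_cast
  field_simp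
  ring

theorem sum_Bbar_zero (m H : ℕ) (hm : Odd m) (hm1 : 1 < m) (hH : 0 < H) (k : ℤ) :
    ∑ b ∈ Finset.range H, Bbar m ((b : ℚ) * k / H) = 0 := by
  have hHq : (H : ℚ) ≠ 0 := by positivity
  have hp : Function.Periodic (fun c : ℤ => Bbar m ((c : ℚ) * k / H)) (H : ℤ) := by
    intro c
    simp only
    rw [← Bbar_add_int _ (c * k / H) k]
    congr 1
    push_cast
    field_simp
  have h := periodic_sum H hH _ hp (-1) 0 (by simp)
  have e : ∀ b : ℕ, Bbar m (((-1 * (b : ℤ) + 0 : ℤ) : ℚ) * k / H) = - Bbar m ((b : ℚ) * k / H) := by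
    intro b
    rw [← Bbar_neg m hm hm1]
    congr 1
    push_cast; ring
  simp only [e, Int.cast_natCast, Finset.sum_neg_distrib] at h
  exact self_eq_neg.1 h.symm

theorem phi_facts (n H a μ : ℕ) (hn : 0 < n) (hH : 0 < H) (ha : a ∣ n) (hμ : μ < n / a * H) :
    Nat.gcd μ (n / a) ∣ n ∧ a * μ / Nat.gcd μ (n / a) < n / Nat.gcd μ (n / a) * H ∧
    Nat.gcd (a * μ / Nat.gcd μ (n / a)) (n / Nat.gcd μ (n / a)) = a ∧
    Nat.gcd μ (n / a) * (a * μ / Nat.gcd μ (n / a)) / a = μ := by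
  obtain ⟨d, rfl⟩ := ha
  have ha : 0 < a := Nat.pos_of_mul_pos_right hn
  have hd : 0 < d := Nat.pos_of_mul_pos_left hn
  rw [Nat.mul_div_cancel_left _ ha] at *
  have hg : 0 < Nat.gcd μ d := Nat.gcd_pos_of_pos_right _ hd
  obtain ⟨ν, δ, hc, h1, h2⟩ := Nat.exists_coprime μ d
  set g := Nat.gcd μ d with hgdef
  clear_value g
  subst h1 h2
  have e1 : a * (ν * g) / g = a * ν := by rw [← mul_assoc, Nat.mul_div_cancel _ hg]
  have e2 : a * (δ * g) / g = a * δ := by rw [← mul_assoc, Nat.mul_div_cancel _ hg]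
  rw [e1, e2]
  refine ⟨⟨a * δ, by ring⟩, ?_, ?_, ?_⟩
  · have : ν < δ * H := by
      by_contra hcon
      push Not at hcon
      have := Nat.mul_le_mul_right g hcon
      nlinarith
    calc a * ν < a * (δ * H) := Nat.mul_lt_mul_of_pos_left this ha
      _ = _ := by ring
  · rw [Nat.gcd_mul_left, hc, mul_one]
  · rw [show g * (a * ν) = a * (ν * g) by ring, Nat.mul_div_cancel_left _ ha]

/-- The Knopp–Parson–Rosen identity for Apostol's generalized Dedekind sums:
`∑_{ad=n, d>0} ∑_{b=0}^{d−1} d^w·s_{w+1}(ak+bh, dh) = σ_{w+1}(n)·s_{w+1}(k,h)`. -/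
theorem knopp_parson_rosen (w : ℕ) (hw : Even w) (hw0 : 0 < w)
    (n : ℕ) (hn : 0 < n) (h k : ℤ) (hh : 0 < h) :
    ∑ d ∈ n.divisors, ∑ b ∈ Finset.range d,
        (d : ℂ) ^ w * apostolS (w + 1) (((n / d : ℕ) : ℤ) * k + (b : ℤ) * h) ((d : ℤ) * h)
      = (∑ d ∈ n.divisors, (d : ℂ) ^ (w + 1)) * apostolS (w + 1) k h := by
  obtain ⟨H, rfl⟩ := Int.eq_ofNat_of_zero_le hh.le
  have hH : 0 < H := by exact_mod_cast hh
  have hHq : (H : ℚ) ≠ 0 := by positivity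
  have hHc : (H : ℂ) ≠ 0 := by exact_mod_cast hH.ne'
  have hnq : (n : ℚ) ≠ 0 := by positivity
  have hnc : (n : ℂ) ≠ 0 := by exact_mod_cast hn.ne'
  -- left side
  have L : ∀ d ∈ n.divisors, ∑ b ∈ Finset.range d,
        (d : ℂ) ^ w * apostolS (w + 1) (((n / d : ℕ) : ℤ) * k + (b : ℤ) * H) ((d : ℤ) * H)
      = ∑ μ ∈ Finset.range (d * H), ((Nat.gcd μ d : ℂ) ^ (w + 1) * ((μ : ℂ) / (d * H))) *
          Bbar (w + 1) ((μ : ℚ) * (n / d : ℕ) / (Nat.gcd μ d) * k / H) := by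
    intro d hd
    have hd0 : 0 < d := Nat.pos_of_mem_divisors hd
    have hdq : (d : ℚ) ≠ 0 := by positivity
    unfold apostolS
    rw [← Finset.mul_sum, Finset.sum_comm, Finset.mul_sum]
    have : ((d : ℤ) * H).toNat = d * H := by
      rw [← Nat.cast_mul]; exact Int.toNat_natCast _
    rw [this]
    apply Finset.sum_congr rfl
    intro μ _
    have hg : 0 < Nat.gcd μ d := Nat.gcd_pos_of_pos_right _ hd0
    have hgq : (Nat.gcd μ d : ℚ) ≠ 0 := by positivity
    have key := sum_b w d μ hd0 ((μ : ℚ) * (n / d : ℕ) * k / (d * H))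
    rw [show (d : ℚ) / (Nat.gcd μ d) * ((μ : ℚ) * (n / d : ℕ) * k / (d * H))
      = (μ : ℚ) * (n / d : ℕ) / (Nat.gcd μ d) * k / H by field_simp] at key
    rw [← Finset.mul_sum, mul_left_comm]
    rw [mul_right_comm, ← key, mul_comm]
    simp only [Int.cast_add, Int.cast_mul, Int.cast_natCast]
    congr 2
    apply Finset.sum_congr rfl
    intro b _
    congr 1
    field_simp
  have R : ∀ g ∈ n.divisors, (g : ℂ) ^ (w + 1) * apostolS (w + 1) k H
      = ∑ l ∈ Finset.range (n / g * H), ((g : ℂ) ^ (w + 1) * ((g : ℂ) * l / (n * H))) *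
          Bbar (w + 1) ((l : ℚ) * k / H) := by
    intro g hg
    obtain ⟨N, rfl⟩ := Nat.dvd_of_mem_divisors hg
    have hg0 : 0 < g := Nat.pos_of_mem_divisors hg
    have hN0 : 0 < N := Nat.pos_of_mul_pos_left hn
    have hgc : (g : ℂ) ≠ 0 := by exact_mod_cast hg0.ne'
    have hNc : (N : ℂ) ≠ 0 := by exact_mod_cast hN0.ne'
    rw [Nat.mul_div_cancel_left _ hg0]
    have hp : Function.Periodic (fun c : ℤ => Bbar (w + 1) ((c : ℚ) * k / H)) (H : ℤ) := by
      intro c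
      simp only
      rw [← Bbar_add_int _ (c * k / H) k]
      congr 1
      push_cast
      field_simp
    have z := sum_Bbar_zero (w + 1) H hw.add_one (by omega) hH k
    have := periodic_sum_mul_id H _ hp (by simpa using z) N
    simp only [Int.cast_natCast] at this
    have e : ∀ l : ℕ, ((g : ℂ) ^ (w + 1) * ((g : ℂ) * l / (((g * N : ℕ) : ℂ) * H))) *
          Bbar (w + 1) ((l : ℚ) * k / H)
        = ((g : ℂ) ^ (w + 1) / (N * H)) * (l * Bbar (w + 1) ((l : ℚ) * k / H)) := by
      intro l; push_cast; field_simp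
    simp only [e]
    rw [← Finset.mul_sum, this]
    unfold apostolS
    rw [Int.toNat_natCast, Finset.mul_sum, Finset.mul_sum, Finset.mul_sum]
    apply Finset.sum_congr rfl
    intro l _
    push_cast
    field_simp
  rw [Finset.sum_congr rfl L, Finset.sum_mul, Finset.sum_congr rfl R, ← Nat.sum_div_divisors,
    Finset.sum_sigma', Finset.sum_sigma']
  refine Finset.sum_bij'
    (fun p _ => ⟨Nat.gcd p.2 (n / p.1), p.1 * p.2 / Nat.gcd p.2 (n / p.1)⟩)
    (fun p _ => ⟨Nat.gcd p.2 (n / p.1), p.1 * p.2 / Nat.gcd p.2 (n / p.1)⟩) ?_ ?_ ?_ ?_ ?_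
  · rintro ⟨a, μ⟩ hp
    simp only [Finset.mem_sigma, Nat.mem_divisors, Finset.mem_range] at hp ⊢
    obtain ⟨f1, f2, f3, f4⟩ := phi_facts n H a μ hn hH hp.1.1 hp.2
    exact ⟨⟨f1, hn.ne'⟩, f2⟩
  · rintro ⟨a, μ⟩ hp
    simp only [Finset.mem_sigma, Nat.mem_divisors, Finset.mem_range] at hp ⊢
    obtain ⟨f1, f2, f3, f4⟩ := phi_facts n H a μ hn hH hp.1.1 hp.2
    exact ⟨⟨f1, hn.ne'⟩, f2⟩
  · rintro ⟨a, μ⟩ hp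
    simp only [Finset.mem_sigma, Nat.mem_divisors, Finset.mem_range] at hp ⊢
    obtain ⟨f1, f2, f3, f4⟩ := phi_facts n H a μ hn hH hp.1.1 hp.2
    simp only [f3, f4]
  · rintro ⟨a, μ⟩ hp
    simp only [Finset.mem_sigma, Nat.mem_divisors, Finset.mem_range] at hp ⊢
    obtain ⟨f1, f2, f3, f4⟩ := phi_facts n H a μ hn hH hp.1.1 hp.2
    simp only [f3, f4]
  · rintro ⟨a, μ⟩ hp
    simp only [Finset.mem_sigma, Nat.mem_divisors, Finset.mem_range] at hp ⊢
    obtain ⟨⟨⟨d, rfl⟩, -⟩, hμ⟩ := hp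
    have ha : 0 < a := Nat.pos_of_mul_pos_right hn
    have hd : 0 < d := Nat.pos_of_mul_pos_left hn
    have hac : (a : ℂ) ≠ 0 := by exact_mod_cast ha.ne'
    have hdc : (d : ℂ) ≠ 0 := by exact_mod_cast hd.ne'
    rw [Nat.mul_div_cancel_left _ ha, Nat.mul_div_cancel _ hd]
    have hg : 0 < Nat.gcd μ d := Nat.gcd_pos_of_pos_right _ hd
    have hgc : (Nat.gcd μ d : ℂ) ≠ 0 := by exact_mod_cast hg.ne'
    have hgq : (Nat.gcd μ d : ℚ) ≠ 0 := by positivity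
    have hdv : Nat.gcd μ d ∣ a * μ := (Nat.gcd_dvd_left μ d).mul_left a
    rw [Nat.cast_div hdv hgc, Nat.cast_div hdv hgq]
    push_cast
    congr 2
    · field_simp
    · ring
end
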